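/- arXiv:2402.13893 — 2 statements merged into one kernel-verified Lean document; each statement's English description precedes it below -/
import Mathlib

section
/- For every n ≥ 2 and every integer r ≥ 1, the set 𝔠_r := {λ ∈ ℝ^n : λ_1 ≥ … ≥ λ_n, λ_1+…+λ_n = 0, and C_r(O_λ) is a convex set} is a convex cone: it contains 0, is closed under addition, and is closed under multiplication by nonnegative real scalars. -/
/-- The `r`-th partial convex hull of a set `X`: the union of the convex hulls of all
`r`-tuples of points of `X`. -/
def partialConvexHull {E : Type*} [AddCommGroup E] [Module ℝ E]
    (r : ℕ) (X : Set E) : Set E :=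
  {y | ∃ f : Fin r → E, (∀ i, f i ∈ X) ∧ y ∈ convexHull ℝ (Set.range f)}

/-- The coadjoint orbit `O_λ` of `SU(n)`: the set of `n × n` complex Hermitian matrices
of trace zero whose eigenvalues, listed with multiplicity, are the entries of `lam`. -/
def coadjointOrbit {n : ℕ} (lam : Fin n → ℝ) : Set (Matrix (Fin n) (Fin n) ℂ) :=
  {A | A.trace = 0 ∧ ∃ hA : A.IsHermitian, ∃ σ : Equiv.Perm (Fin n),
      ∀ i, hA.eigenvalues (σ i) = lam i}

/-!
By the Schur–Horn theorem a Hermitian matrix lies in the convex hull of `O_λ` exactly when its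
spectrum is `D λ` for a doubly stochastic `D`, and `D` may be chosen to preserve decreasing vectors.
Summing a convex combination of `r` points of `O_λ` over the cyclic shifts of its weights shows that
`C_r(O_λ)` is convex iff, for every such `D`, the matrix `diag(r D λ)` is a sum of `r` Hermitian
matrices with spectrum `λ`. For fixed `D` the set of such `λ` is a convex cone, because the
solutions of Horn's problem (which spectra occur in a sum of Hermitian matrices with given spectra)
are closed under addition.

For that last fact, a solution is rephrased as the vanishing of the trace-free part of the moment
map of a tuple of flags, which makes that tuple semistable with respect to weights read off from the
spectra. If `U` and `U'` are the tuples of two solutions, then a transcendental point of the line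
through `U` and `U'` has conjugates, under field automorphisms of `ℂ`, that approach both ends, so
the tuple of flags at that point is semistable for both weights. Semistability at one tuple of flags
is additive in the weights, and the Kempf–Ness theorem turns it back into a zero of the moment map.
-/

namespace HornProblem

open Matrix
open scoped ComplexOrder MatrixOrder

/-! ### Linear algebra -/

theorem exists_eq_mul_of_rank {K l m : Type*} [Field K] [Fintype m] (M : Matrix l m K) :
    ∃ (A : Matrix l (Fin M.rank) K) (B : Matrix (Fin M.rank) m K), M = A * B := by
  classical
  let b := Module.finBasisOfFinrankEq K M.mulVecLin.range (rfl : _ = M.rank)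
  refine ⟨of fun i a => (b a : l → K) i,
    of fun a j => b.repr (M.mulVecLin.rangeRestrict (Pi.single j 1)) a, ?_⟩
  ext i j
  calc M i j = (M.mulVecLin (Pi.single j 1)) i := by simp
    _ = _ := congrArg (fun v : M.mulVecLin.range => (v : l → K) i)
      (b.sum_repr (M.mulVecLin.rangeRestrict (Pi.single j 1))).symm
    _ = _ := by
      simp only [AddSubmonoidClass.coe_finsetSum, SetLike.val_smul, Finset.sum_apply,
        Pi.smul_apply, smul_eq_mul, mul_apply, of_apply, mul_comm]

theorem rank_map_le {K L l m : Type*} [Field K] [Field L] [Fintype m]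
    (σ : K →+* L) (M : Matrix l m K) : (M.map σ).rank ≤ M.rank := by
  obtain ⟨A, B, hM⟩ := exists_eq_mul_of_rank M
  calc (M.map σ).rank = (A.map σ * B.map σ).rank := by rw [← Matrix.map_mul, ← hM]
    _ ≤ (A.map σ).rank := rank_mul_le_left _ _
    _ ≤ M.rank := (rank_le_card_width _).trans_eq (Fintype.card_fin _)

theorem isClosed_setOf_rank_le {𝕜 m n : Type*} [NontriviallyNormedField 𝕜] [CompleteSpace 𝕜]
    [Finite m] [Fintype n] (s : ℕ) :
    IsClosed {M : Matrix m n 𝕜 | M.rank ≤ s} := by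
  classical
  have := Fintype.ofFinite m
  let f : Matrix m n 𝕜 →ₗ[𝕜] (n → 𝕜) →L[𝕜] (m → 𝕜) :=
    LinearMap.toContinuousLinearMap.toLinearMap ∘ₗ toLin'.toLinearMap
  have hf (M : Matrix m n 𝕜) : (f M : (n → 𝕜) →ₗ[𝕜] (m → 𝕜)).rank = (M.rank : Cardinal) := by
    rw [Matrix.rank, LinearMap.rank, Module.finrank_eq_rank]
    rfl
  convert ((isOpen_setOfPred_nat_le_rank (𝕜 := 𝕜) (s + 1)).preimage
    f.continuous_of_finiteDimensional).isClosed_compl using 1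
  ext M
  simp only [Set.mem_ofPred_eq, Set.mem_compl_iff, Set.mem_preimage, hf, Nat.cast_le]
  omega

section
variable (K : Type*) {l V : Type*} [LinearOrder l] [Field K] [AddCommGroup V] [Module K V]

/-- The indices of the vectors of `v` outside the span of their predecessors: the greedy choice
of a basis of the span of `v`. -/
def pivots (v : l → V) : Set l := {j | v j ∉ Submodule.span K (v '' Set.Iio j)}

theorem linearIndepOn_pivots [Finite l] (v : l → V) : LinearIndepOn K v (pivots K v) := by
  classical
  have key (s : Finset l) : (s : Set l) ⊆ pivots K v → LinearIndepOn K v s := by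
    induction s using Finset.induction_on_max with
    | empty => simp
    | insert a s hs ih =>
      rw [Finset.coe_insert, Set.insert_subset_iff]
      rintro ⟨ha, hsub⟩
      exact (ih hsub).insert fun hmem =>
        ha (Submodule.span_mono (Set.image_mono fun b hb => hs b hb) hmem)
  simpa using key (pivots K v).toFinite.toFinset (by simp)

theorem span_image_pivots_inter_Iic [WellFoundedLT l] (v : l → V) (d : l) :
    Submodule.span K (v '' (pivots K v ∩ Set.Iic d)) = Submodule.span K (v '' Set.Iic d) := by
  refine le_antisymm (Submodule.span_mono (Set.image_mono Set.inter_subset_right)) ?_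
  induction d using WellFoundedLT.induction with
  | ind d ih =>
    have hlt (j : l) (hj : j < d) : v j ∈ Submodule.span K (v '' (pivots K v ∩ Set.Iic d)) :=
      Submodule.span_mono (Set.image_mono <| Set.inter_subset_inter_right _ <|
        Set.Iic_subset_Iic.2 hj.le) (ih j hj <| Submodule.subset_span ⟨j, le_rfl, rfl⟩)
    rw [Submodule.span_le]
    rintro _ ⟨j, hj, rfl⟩
    by_cases hpivot : j ∈ pivots K v
    · exact Submodule.subset_span ⟨j, ⟨hpivot, hj⟩, rfl⟩
    · refine Submodule.span_le.2 ?_ (not_not.1 hpivot)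
      rintro _ ⟨i, hi, rfl⟩
      exact hlt i (hi.trans_le hj)

theorem span_image_pivots [WellFoundedLT l] (v : l → V) :
    Submodule.span K (v '' pivots K v) = Submodule.span K (Set.range v) := by
  refine le_antisymm (Submodule.span_mono (Set.image_subset_range _ _)) (Submodule.span_le.2 ?_)
  rintro _ ⟨j, rfl⟩
  refine Submodule.span_mono (Set.image_mono Set.inter_subset_left)
    ((span_image_pivots_inter_Iic K v j).ge (Submodule.subset_span ⟨j, le_rfl, rfl⟩))
end

theorem exists_submatrix_det_ne_zero {K l m : Type*} [Field K] [LinearOrder l] [Finite l]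
    [Fintype m] [DecidableEq m] (M : Matrix l m K) (hM : M.rank = Fintype.card m) :
    ∃ e : m → l, e.Injective ∧ (M.submatrix e id).det ≠ 0 ∧
      ∀ d, (M.submatrix (Subtype.val : Set.Iic d → l) id).rank ≤ {a | e a ≤ d}.ncard := by
  have := Fintype.ofFinite l
  let J := pivots K M.row
  have hindep : LinearIndependent K fun j : J => M.row j := linearIndepOn_pivots K M.row
  have := Fintype.ofFinite J
  let E : m ≃ J := Fintype.equivOfCardEq <| by
    rw [← hM, rank_eq_finrank_span_row, ← span_image_pivots, Set.image_eq_range,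
      finrank_span_eq_card hindep]
  refine ⟨fun a => E a, Subtype.val_injective.comp E.injective, ?_, fun d => ?_⟩
  · rw [← isUnit_iff_ne_zero, ← isUnit_iff_isUnit_det, ← linearIndependent_rows_iff_isUnit]
    exact hindep.comp E E.injective
  · have hrows : Set.range (M.submatrix (Subtype.val : Set.Iic d → l) id).row =
        M.row '' Set.Iic d := by
      rw [Set.image_eq_range]
      rfl
    have hpivots : J ∩ Set.Iic d = (fun a => (E a : l)) '' {a | (E a : l) ≤ d} := by
      ext j
      exact ⟨fun ⟨hj, hjd⟩ => ⟨E.symm ⟨j, hj⟩, by simpa using hjd, by simp⟩,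
        by rintro ⟨a, ha, rfl⟩; exact ⟨(E a).2, ha⟩⟩
    rw [rank_eq_finrank_span_row, hrows, ← span_image_pivots_inter_Iic]
    calc Set.finrank K (M.row '' (J ∩ Set.Iic d)) ≤ (M.row '' (J ∩ Set.Iic d)).ncard := by
          have := Fintype.ofFinite (M.row '' (J ∩ Set.Iic d))
          rw [Set.ncard_eq_toFinset_card']
          exact finrank_span_le_card _
      _ ≤ (J ∩ Set.Iic d).ncard := Set.ncard_image_le
      _ ≤ {a | (E a : l) ≤ d}.ncard := by rw [hpivots]; exact Set.ncard_image_le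

theorem exists_unitary_mul_isUpperTriangular {n : ℕ} (g : Matrix (Fin n) (Fin n) ℂ) :
    ∃ (U : unitaryGroup (Fin n) ℂ) (T : Matrix (Fin n) (Fin n) ℂ),
      T.IsUpperTriangular ∧ g = U * T := by
  let cols : Fin n → EuclideanSpace ℂ (Fin n) := fun j => WithLp.toLp 2 (g.col j)
  let std := EuclideanSpace.basisFun (Fin n) ℂ
  let b := InnerProductSpace.gramSchmidtOrthonormalBasis finrank_euclideanSpace cols
  exact ⟨⟨std.toBasis.toMatrix b, std.toMatrix_orthonormalBasis_mem_unitary b⟩,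
    b.toBasis.toMatrix cols,
    InnerProductSpace.gramSchmidtOrthonormalBasis_inv_isUpperTriangular _ cols,
    (std.toBasis.toMatrix_mul_toMatrix b.toBasis cols).symm⟩

instance compactSpace_unitaryGroup {𝕜 m : Type*} [RCLike 𝕜] [Fintype m] [DecidableEq m] :
    CompactSpace (unitaryGroup m 𝕜) := by
  refine isCompact_iff_compactSpace.1 <| (isCompact_univ_pi fun _ : m => isCompact_univ_pi
    fun _ : m => isCompact_closedBall (0 : 𝕜) 1).of_isClosed_subset ?_ fun U hU i _ j _ => by
      simpa using entry_norm_bound_of_unitary hU i j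
  have : (unitaryGroup m 𝕜 : Set (Matrix m m 𝕜)) = {U | star U * U = 1} :=
    Set.ext fun _ => mem_unitaryGroup_iff'
  rw [this]
  exact isClosed_eq (by fun_prop) continuous_const

theorem isUnit_det_unitary {m R : Type*} [CommRing R] [StarRing R] [Fintype m]
    [DecidableEq m] (U : unitaryGroup m R) : IsUnit (U : Matrix m m R).det :=
  (isUnit_iff_isUnit_det _).1 Unitary.isUnit_coe

theorem re_trace_le_rank {m : Type*} [Fintype m] [DecidableEq m] {A : Matrix m m ℂ}
    (h0 : 0 ≤ A) (h1 : A ≤ 1) : A.trace.re ≤ A.rank := by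
  have hA : A.IsHermitian := (nonneg_iff_posSemidef.1 h0).1
  have hle (i : m) : hA.eigenvalues i ≤ 1 :=
    (CFC.le_one_iff A hA).1 h1 _ (hA.eigenvalues_mem_spectrum_real i)
  calc A.trace.re = ∑ i, hA.eigenvalues i := by simp [hA.trace_eq_sum_eigenvalues]
    _ = ∑ i with hA.eigenvalues i ≠ 0, hA.eigenvalues i := (Finset.sum_filter_ne_zero _).symm
    _ ≤ ∑ i with hA.eigenvalues i ≠ 0, 1 := Finset.sum_le_sum fun i _ => hle i
    _ = A.rank := by simp [hA.rank_eq_card_non_zero_eigs, Fintype.card_subtype]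

theorem log_norm_det_le {m : Type*} [Fintype m] [DecidableEq m] {A : Matrix m m ℂ}
    (hA : A.PosDef) : Real.log ‖A.det‖ ≤ A.trace.re - Fintype.card m := by
  have htrace : A.trace.re = ∑ i, hA.1.eigenvalues i := by
    simp [hA.1.trace_eq_sum_eigenvalues]
  have hdet : ‖A.det‖ = ∏ i, hA.1.eigenvalues i := by
    rw [hA.1.det_eq_prod_eigenvalues, norm_prod]
    exact Finset.prod_congr rfl fun i _ => by simp [abs_of_pos (hA.eigenvalues_pos i)]
  rw [hdet, htrace, Real.log_prod fun i _ => (hA.eigenvalues_pos i).ne',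
    Fintype.card_eq_sum_ones, Nat.cast_sum, Nat.cast_one, ← Finset.sum_sub_distrib]
  exact Finset.sum_le_sum fun i _ => Real.log_le_sub_one_of_pos (hA.eigenvalues_pos i)

theorem conjTranspose_mul_self_submatrix_le {l m m' : Type*} [Fintype l] [Fintype m] [Finite m']
    (M : Matrix l m' ℂ) {e : m → l} (he : e.Injective) :
    (M.submatrix e id)ᴴ * M.submatrix e id ≤ Mᴴ * M := by
  classical
  let E : Matrix m l ℂ := (1 : Matrix l l ℂ).submatrix e id
  have hEM : M.submatrix e id = E * M := (one_submatrix_mul e (.refl l) M).symm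
  have hE : E * Eᴴ = 1 := by
    ext i j
    simp [E, Matrix.mul_apply, one_apply, he.eq_iff]
  have hproj : IsStarProjection (Eᴴ * E) :=
    ⟨by rw [IsIdempotentElem, Matrix.mul_assoc, ← Matrix.mul_assoc E, hE, Matrix.one_mul],
      isHermitian_conjTranspose_mul_self E⟩
  have hpos := (le_iff.1 hproj.le_one).conjTranspose_mul_mul_same M
  rw [le_iff, hEM, conjTranspose_mul]
  simpa only [Matrix.mul_sub, Matrix.sub_mul, Matrix.mul_one, Matrix.mul_assoc] using hpos

theorem one_le_norm_det {m : Type*} [Fintype m] [DecidableEq m] {A : Matrix m m ℂ} (h1 : 1 ≤ A) :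
    1 ≤ ‖A.det‖ := by
  have hA : A.IsHermitian := (nonneg_iff_posSemidef.1 (zero_le_one.trans h1)).1
  rw [hA.det_eq_prod_eigenvalues, norm_prod]
  refine Finset.one_le_prod fun i _ => ?_
  calc (1 : ℝ) ≤ hA.eigenvalues i :=
        (CFC.one_le_iff A hA).1 h1 _ (hA.eigenvalues_mem_spectrum_real i)
    _ ≤ ‖(hA.eigenvalues i : ℂ)‖ := by simp [le_abs_self]

theorem norm_det_sq_le_norm_det_gram {l m : Type*} [Fintype l] [Fintype m] [DecidableEq m]
    (M : Matrix l m ℂ) {e : m → l} (he : e.Injective) :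
    ‖(M.submatrix e id).det‖ ^ 2 ≤ ‖(Mᴴ * M).det‖ := by
  set B := M.submatrix e id with hB
  by_cases hdet : B.det = 0
  · simp [hdet]
  have hunit : IsUnit B.det := isUnit_iff_ne_zero.2 hdet
  obtain ⟨N, hN⟩ : ∃ N, M = N * B :=
    ⟨M * B⁻¹, by rw [Matrix.mul_assoc, nonsing_inv_mul _ hunit, Matrix.mul_one]⟩
  have hrows : N.submatrix e id = 1 := by
    have : N.submatrix e id * B = 1 * B := by
      rw [one_mul, hB]
      nth_rw 2 [hN]
      rfl
    exact ((isUnit_iff_isUnit_det _).2 hunit).mul_right_cancel this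
  have hgram : 1 ≤ Nᴴ * N := by
    simpa [hrows] using conjTranspose_mul_self_submatrix_le N he
  have hdet_gram : ‖(Mᴴ * M).det‖ = ‖B.det‖ ^ 2 * ‖(Nᴴ * N).det‖ := by
    have hfac : Mᴴ * M = Bᴴ * (Nᴴ * N) * B := by
      rw [hN, conjTranspose_mul]
      simp only [Matrix.mul_assoc]
    rw [hfac, det_mul, det_mul, det_conjTranspose, norm_mul, norm_mul, norm_star]
    ring
  rw [hdet_gram]
  exact le_mul_of_one_le_right (sq_nonneg _) (one_le_norm_det hgram)

theorem exists_forall_of_eventually {X β : Type*} [TopologicalSpace X] [CompactSpace X]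
    [Preorder β] [IsDirectedOrder β] [Nonempty β] {P : X → β → Prop}
    (hmono : ∀ x, Monotone (P x)) (hloc : ∀ x, ∃ b, ∀ᶠ y in nhds x, P y b) : ∃ b, ∀ x, P x b := by
  suffices h : ∃ b, ∀ x ∈ (Set.univ : Set X), P x b by simpa using h
  refine isCompact_univ.induction_on (p := fun s => ∃ b, ∀ x ∈ s, P x b) (by simp)
    (fun s t hst ⟨b, hb⟩ => ⟨b, fun x hx => hb x (hst hx)⟩) (fun s t ⟨b, hb⟩ ⟨c, hc⟩ => ?_)
    (fun x _ => ?_)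
  · obtain ⟨d, hbd, hcd⟩ := exists_ge_ge b c
    exact ⟨d, fun x hx => hx.elim (fun h => hmono x hbd (hb x h)) fun h => hmono x hcd (hc x h)⟩
  · obtain ⟨b, hb⟩ := hloc x
    exact ⟨{y | P y b}, mem_nhdsWithin_of_mem_nhds hb, b, fun _ => id⟩

/-! ### Points with dense orbit under field automorphisms -/

theorem exists_mem_isTranscendenceBasis {k K : Type*} [Field k] [Field K] [Algebra k K] {y : K}
    (hy : Transcendental k y) :
    ∃ t : Set K, y ∈ t ∧ IsTranscendenceBasis k (Subtype.val : t → K) := by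
  have hindep : AlgebraicIndepOn k id ({y} : Set K) :=
    (algebraicIndependent_singleton_iff (⟨y, rfl⟩ : ({y} : Set K))).2 hy
  obtain ⟨t, ht, hbasis⟩ := exists_isTranscendenceBasis_superset hindep
  exact ⟨t, ht rfl, hbasis⟩

theorem exists_algEquiv_apply_eq {k K : Type*} [Field k] [Field K] [Algebra k K] [IsAlgClosed K]
    {z w : K} (hz : Transcendental k z) (hw : Transcendental k w) : ∃ σ : K ≃ₐ[k] K, σ z = w := by
  classical
  obtain ⟨s, hzs, hs⟩ := exists_mem_isTranscendenceBasis hz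
  obtain ⟨t, hwt, ht⟩ := exists_mem_isTranscendenceBasis hw
  obtain ⟨e, he⟩ : ∃ e : s ≃ t, e ⟨z, hzs⟩ = ⟨w, hwt⟩ := by
    obtain ⟨e₀⟩ := Cardinal.eq.1 (hs.cardinalMk_eq ht)
    exact ⟨e₀.trans (Equiv.swap (e₀ ⟨z, hzs⟩) ⟨w, hwt⟩), by simp⟩
  have := IsAlgClosed.isAlgClosure_of_transcendence_basis _ hs
  have := IsAlgClosed.isAlgClosure_of_transcendence_basis _ ht
  let E : Algebra.adjoin k (Set.range (Subtype.val : s → K)) ≃ₐ[k]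
      Algebra.adjoin k (Set.range (Subtype.val : t → K)) :=
    (hs.1.aevalEquiv.symm.trans (MvPolynomial.renameEquiv k e)).trans ht.1.aevalEquiv
  let σ : K ≃+* K := IsAlgClosure.equivOfEquiv K K E.toRingEquiv
  have hσ (x) : σ (algebraMap _ K x) = algebraMap _ K (E x) :=
    IsAlgClosure.equivOfEquiv_algebraMap K K E.toRingEquiv x
  have hX (u : s) : hs.1.aevalEquiv (MvPolynomial.X u) = ⟨u, Algebra.subset_adjoin ⟨u, rfl⟩⟩ :=
    Subtype.ext (by simp)
  have hE : E (hs.1.aevalEquiv (MvPolynomial.X ⟨z, hzs⟩)) =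
      ⟨w, Algebra.subset_adjoin ⟨⟨w, hwt⟩, rfl⟩⟩ := Subtype.ext (by simp [E, he])
  refine ⟨AlgEquiv.ofRingEquiv (f := σ) fun a => ?_, ?_⟩
  · rw [IsScalarTower.algebraMap_apply k (Algebra.adjoin k (Set.range (Subtype.val : s → K))) K,
      hσ, E.commutes]
    rfl
  · have := hσ (hs.1.aevalEquiv (MvPolynomial.X ⟨z, hzs⟩))
    rwa [hE, hX] at this

theorem exists_dense_range_algEquiv (k : Subfield ℂ) [Countable k] :
    ∃ z : ℂ, Dense (Set.range fun σ : ℂ ≃ₐ[k] ℂ => σ z) := by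
  have hdense : Dense {x : ℂ | IsAlgebraic k x}ᶜ := (Algebraic.countable k ℂ).dense_compl ℂ
  obtain ⟨z, hz⟩ := hdense.nonempty
  exact ⟨z, hdense.mono fun w hw => exists_algEquiv_apply_eq hz hw⟩

/-! ### Flags and corners -/

variable {n : ℕ} {ι : Type*} [Fintype ι]

/-- The adjoint action `A ↦ U A U⁻¹` of the unitary group on complex matrices. -/
noncomputable abbrev Ad (U : unitaryGroup (Fin n) ℂ) :
    Matrix (Fin n) (Fin n) ℂ ≃⋆ₐ[ℝ] Matrix (Fin n) (Fin n) ℂ :=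
  Unitary.conjStarAlgAut ℝ _ U

/-- The complex diagonal matrix with given real diagonal entries. -/
noncomputable def realDiag : (Fin n → ℝ) →ₐ[ℝ] Matrix (Fin n) (Fin n) ℂ :=
  (diagonalAlgHom ℝ).comp ((Algebra.ofId ℝ ℂ).compLeft _)

theorem realDiag_apply (a : Fin n → ℝ) : realDiag a = diagonal fun i => (a i : ℂ) := rfl

theorem trace_realDiag_re (a : Fin n → ℝ) : (realDiag a).trace.re = ∑ i, a i := by
  simp [realDiag_apply]

/-- The projection onto the `d`-th member of the standard flag, spanned by the first `d + 1`
basis vectors. -/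
noncomputable def flagProj (d : Fin n) : Matrix (Fin n) (Fin n) ℂ :=
  realDiag ((Set.Iic d).indicator 1)

/-- The first `k + 1` columns of a matrix, which span the `k`-th member of its flag. -/
abbrev flagCols (k : Fin n) (M : Matrix (Fin n) (Fin n) ℂ) :
    Matrix (Fin n) (Set.Iic k) ℂ :=
  M.submatrix id (↑)

/-- The top left block of a matrix with `d + 1` rows and `k + 1` columns. -/
abbrev corner (d k : Fin n) (M : Matrix (Fin n) (Fin n) ℂ) :
    Matrix (Set.Iic d) (Set.Iic k) ℂ :=
  M.submatrix (↑) (↑)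

theorem submatrix_mul_of_forall_notMem {R l l' m m' p : Type*} [Semiring R] [Fintype m]
    (A : Matrix l m R) (B : Matrix m p R) (f : l' → l) (g : m' → p) (s : Set m) [Fintype s]
    (h : ∀ i j, ∀ a ∉ s, A (f i) a * B a (g j) = 0) :
    (A * B).submatrix f g = A.submatrix f ((↑) : s → m) * B.submatrix (↑) g := by
  ext i j
  simp only [submatrix_apply, Matrix.mul_apply]
  refine (Fintype.sum_of_injective _ Subtype.val_injective _ _ (fun a ha => h i j a ?_)
    fun _ => rfl).symm
  simpa using ha

theorem corner_mul_of_isLowerTriangular {T : Matrix (Fin n) (Fin n) ℂ}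
    (hT : T.IsLowerTriangular) (d k : Fin n)
    (M : Matrix (Fin n) (Fin n) ℂ) : corner d k (T * M) = corner d d T * corner d k M :=
  submatrix_mul_of_forall_notMem T M _ _ _ fun i _ a ha => by
    rw [hT (OrderDual.toDual_lt_toDual.2 (i.2.trans_lt (not_le.1 ha))), zero_mul]

theorem flagCols_mul_of_isUpperTriangular {T : Matrix (Fin n) (Fin n) ℂ}
    (hT : T.IsUpperTriangular) (k : Fin n)
    (M : Matrix (Fin n) (Fin n) ℂ) : flagCols k (M * T) = flagCols k M * corner k k T :=
  submatrix_mul_of_forall_notMem M T _ _ _ fun _ j a ha => by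
    rw [hT (j.2.trans_lt (not_le.1 ha)), mul_zero]

theorem flagCols_mul_conjTranspose (k : Fin n) (M : Matrix (Fin n) (Fin n) ℂ) :
    flagCols k M * (flagCols k M)ᴴ = M * flagProj k * Mᴴ := by
  have h := submatrix_mul_of_forall_notMem (M * flagProj k) Mᴴ id id (Set.Iic k) fun i j a ha => by
    simp_all [flagProj, realDiag_apply, mul_diagonal]
  rw [submatrix_id_id] at h
  rw [h]
  congr 1
  ext i a
  simp [flagProj, realDiag_apply, mul_diagonal]

theorem conjTranspose_flagCols_mul_self (k : Fin n) (U : unitaryGroup (Fin n) ℂ) :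
    (flagCols k U)ᴴ * flagCols k U = 1 := by
  ext i j
  simpa [Matrix.mul_apply, one_apply, Subtype.ext_iff] using
    congrFun₂ (mem_unitaryGroup_iff'.1 U.2) i j

theorem trace_flagProj_mul (d : Fin n) (M : Matrix (Fin n) (Fin n) ℂ) :
    (flagProj d * M).trace = (corner d d M).trace := by
  refine (Fintype.sum_of_injective _ Subtype.val_injective _ _ (fun i hi => ?_) fun i => ?_).symm
  · simp_all [flagProj, realDiag_apply, diagonal_mul]
  · simp [flagProj, realDiag_apply, diagonal_mul]

theorem trace_flagProj (d : Fin n) : (flagProj d : Matrix (Fin n) (Fin n) ℂ).trace = d + 1 := by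
  rw [← mul_one (flagProj d), trace_flagProj_mul]
  simp [trace]

theorem trace_Ad (U : unitaryGroup (Fin n) ℂ) (A : Matrix (Fin n) (Fin n) ℂ) :
    (Ad U A).trace = A.trace := by
  rw [Unitary.conjStarAlgAut_apply, trace_mul_comm, ← Matrix.mul_assoc, Unitary.coe_star_mul_self,
    Matrix.one_mul]

theorem re_trace_flagProj_mul_Ad_le_rank (W : unitaryGroup (Fin n) ℂ) (d k : Fin n) :
    (flagProj d * Ad W (flagProj k)).trace.re ≤ (corner d k W).rank := by
  set B := corner d k W
  have hle : Bᴴ * B ≤ 1 :=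
    (conjTranspose_mul_self_submatrix_le (flagCols k W)
      Subtype.val_injective).trans_eq (conjTranspose_flagCols_mul_self k W)
  have htrace : (flagProj d * Ad W (flagProj k)).trace = (Bᴴ * B).trace := by
    rw [trace_mul_comm, Unitary.conjStarAlgAut_apply, star_eq_conjTranspose,
      ← flagCols_mul_conjTranspose, trace_mul_comm, trace_flagProj_mul,
      trace_mul_comm Bᴴ]
    rfl
  rw [htrace, ← rank_conjTranspose_mul_self]
  exact re_trace_le_rank (posSemidef_conjTranspose_mul_self B).nonneg hle

/-! ### Semistable tuples of flags -/

/-- Semistability of the flags spanned by the columns of the `g i`, weighted by `c`: King's slope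
inequality for all subspaces, each of which is the kernel of the first rows of a unitary `V`.
The slope `∑ c i k (k + 1) / n` is cleared of its denominator. -/
def IsSemistable (c : ι → Fin n → ℝ) (g : ι → Matrix (Fin n) (Fin n) ℂ) : Prop :=
  ∀ (V : unitaryGroup (Fin n) ℂ) (d : Fin n),
    (∑ i, ∑ k, c i k * (k + 1)) * (d + 1) ≤
      n * ∑ i, ∑ k, c i k * (corner d k (V * g i)).rank

theorem IsSemistable.add {c c' : ι → Fin n → ℝ} {g : ι → Matrix (Fin n) (Fin n) ℂ}
    (hc : IsSemistable c g) (hc' : IsSemistable c' g) : IsSemistable (c + c') g := by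
  intro V d
  simpa only [Pi.add_apply, add_mul _ _ (_ : ℝ), Finset.sum_add_distrib, mul_add (n : ℝ)] using
    add_le_add (hc V d) (hc' V d)

/-- The value at the flags `U i` of the moment map of the unitary group acting on tuples of
flags polarized by `c`. -/
noncomputable def moment (c : ι → Fin n → ℝ) (U : ι → unitaryGroup (Fin n) ℂ) :
    Matrix (Fin n) (Fin n) ℂ :=
  ∑ i, Ad (U i) (∑ k, c i k • flagProj k)

theorem trace_mul_moment_re (c : ι → Fin n → ℝ) (U : ι → unitaryGroup (Fin n) ℂ)
    (M : Matrix (Fin n) (Fin n) ℂ) : (M * moment c U).trace.re =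
      ∑ i, ∑ k, c i k * (M * Ad (U i) (flagProj k)).trace.re := by
  simp only [moment, map_sum, map_smul, Matrix.mul_sum, Matrix.mul_smul, trace_sum, trace_smul,
    Complex.re_sum, Complex.smul_re, smul_eq_mul]

theorem Ad_moment (V : unitaryGroup (Fin n) ℂ) (c : ι → Fin n → ℝ)
    (U : ι → unitaryGroup (Fin n) ℂ) : Ad V (moment c U) = moment c fun i => V * U i := by
  simp only [moment, map_sum (Ad V), ← Unitary.conjStarAlgAut_mul_apply]

theorem isSemistable_of_moment_eq {c : ι → Fin n → ℝ} (hc : 0 ≤ c)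
    {U : ι → unitaryGroup (Fin n) ℂ} {t : ℝ} (hU : moment c U = t • 1) :
    IsSemistable c fun i => (U i : Matrix (Fin n) (Fin n) ℂ) := by
  intro V d
  have hslope : ∑ i, ∑ k, c i k * (k + 1) = t * n := by
    have h := trace_mul_moment_re c U 1
    simp only [Matrix.one_mul, trace_Ad, trace_flagProj] at h
    simpa [hU] using h.symm
  have hflag : t * (d + 1) = ∑ i, ∑ k, c i k *
      (flagProj d * Ad (V * U i) (flagProj k)).trace.re := by
    rw [← trace_mul_moment_re, ← Ad_moment, hU]
    simp [trace_flagProj, mul_add]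
  calc (∑ i, ∑ k, c i k * (k + 1)) * ((d : ℝ) + 1) = n * (t * (d + 1)) := by rw [hslope]; ring
    _ ≤ n * ∑ i, ∑ k, c i k * (corner d k (V * U i)).rank := by
      rw [hflag]
      gcongr with i _ k _
      · exact hc i k
      · exact re_trace_flagProj_mul_Ad_le_rank (V * U i) d k

theorem exists_unitary_rank_corner_le {V : Matrix (Fin n) (Fin n) ℂ} (hV : IsUnit V.det) :
    ∃ V' : unitaryGroup (Fin n) ℂ, ∀ (d k : Fin n) (M : Matrix (Fin n) (Fin n) ℂ),
      (corner d k (V' * M)).rank ≤ (corner d k (V * M)).rank := by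
  obtain ⟨U, T, hT, hVT⟩ := exists_unitary_mul_isUpperTriangular Vᴴ
  have hTdet : IsUnit T.det := by
    have h : IsUnit (Vᴴ).det := by rw [det_conjTranspose]; exact hV.star
    rw [hVT, det_mul] at h
    exact isUnit_of_mul_isUnit_right h
  have := invertibleOfIsUnitDet T hTdet
  have hlower : (T⁻¹)ᴴ.IsLowerTriangular := fun i j hij => by
    have hT' : T⁻¹ j i = 0 := blockTriangular_inv_of_blockTriangular hT hij
    rw [conjTranspose_apply, hT', star_zero]
  have hstar : ((star U : unitaryGroup (Fin n) ℂ) : Matrix _ _ ℂ) = (T⁻¹)ᴴ * V := by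
    have hV : V = Tᴴ * Uᴴ := by rw [← conjTranspose_mul, ← hVT, conjTranspose_conjTranspose]
    rw [hV, ← Matrix.mul_assoc, ← conjTranspose_mul, mul_nonsing_inv _ hTdet, conjTranspose_one,
      Matrix.one_mul]
    rfl
  refine ⟨star U, fun d k M => ?_⟩
  rw [hstar, Matrix.mul_assoc, corner_mul_of_isLowerTriangular hlower]
  exact rank_mul_le_right _ _

theorem IsSemistable.of_specialization {k : Subfield ℂ} {z w : ℂ}
    (hz : Dense (Set.range fun σ : ℂ ≃ₐ[k] ℂ => σ z)) {g : ℂ → ι → Matrix (Fin n) (Fin n) ℂ}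
    (hg : ∀ i, Continuous fun y => g y i) (hσ : ∀ (σ : ℂ ≃ₐ[k] ℂ) i, (g z i).map σ = g (σ z) i)
    {c : ι → Fin n → ℝ} (hc : 0 ≤ c) (hw : IsSemistable c (g w)) : IsSemistable c (g z) := by
  -- A subspace of small slope at `z` gives one at each conjugate `σ z`, and by compactness of the
  -- unitary group and semicontinuity of rank also at the limit `w`.
  intro V d
  let S : Set (unitaryGroup (Fin n) ℂ × ℂ) :=
    {p | ∀ i k, (corner d k (p.1 * g p.2 i)).rank ≤ (corner d k (V * g z i)).rank}
  have hclosed : IsClosed (Prod.snd '' S) := by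
    refine isClosedMap_snd_of_compactSpace S ?_
    simp only [S, Set.ofPred_forall]
    refine isClosed_iInter fun i => isClosed_iInter fun k => ?_
    have := hg i
    exact (isClosed_setOf_rank_le _).preimage (by fun_prop)
  have horbit : Set.range (fun σ : ℂ ≃ₐ[k] ℂ => σ z) ⊆ Prod.snd '' S := by
    rintro _ ⟨σ, rfl⟩
    let f : ℂ →+* ℂ := σ
    have hunit : IsUnit (f.mapMatrix (V : Matrix (Fin n) (Fin n) ℂ)).det := by
      rw [← f.map_det]
      exact (isUnit_det_unitary V).map f
    obtain ⟨V', hV'⟩ := exists_unitary_rank_corner_le hunit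
    refine ⟨(V', σ z), fun i k => ?_, rfl⟩
    calc (corner d k (V' * g (σ z) i)).rank
        ≤ (corner d k (f.mapMatrix (V : Matrix (Fin n) (Fin n) ℂ) * g (σ z) i)).rank := hV' d k _
      _ = ((corner d k (V * g z i)).map f).rank := by
        rw [← hσ, ← submatrix_map, Matrix.map_mul]
        rfl
      _ ≤ (corner d k (V * g z i)).rank := rank_map_le f _
  obtain ⟨⟨V', _⟩, hV', rfl⟩ := hclosed.closure_subset (hz.mono horbit w)
  refine (hw V' d).trans ?_
  gcongr with i _ k _
  · exact hc i k
  · exact hV' i k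

theorem exists_generic_flags (U U' : ι → unitaryGroup (Fin n) ℂ) :
    ∃ g : ι → Matrix (Fin n) (Fin n) ℂ, (∀ i, IsUnit (g i).det) ∧ ∀ c, 0 ≤ c →
      (IsSemistable c fun i => (U i : Matrix (Fin n) (Fin n) ℂ)) ∨
        (IsSemistable c fun i => (U' i : Matrix (Fin n) (Fin n) ℂ)) → IsSemistable c g := by
  let S : Set ℂ := Set.range (fun p : ι × Fin n × Fin n => (U p.1 : Matrix _ _ ℂ) p.2.1 p.2.2) ∪
    Set.range fun p : ι × Fin n × Fin n => (U' p.1 : Matrix _ _ ℂ) p.2.1 p.2.2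
  have : Countable (Subfield.closure S) := by
    rw [← Cardinal.mk_le_aleph0_iff]
    refine (Subfield.cardinalMk_closure_le_max S).trans (max_le ?_ le_rfl)
    exact Cardinal.le_aleph0_iff_set_countable.2
      ((Set.countable_range _).union (Set.countable_range _))
  obtain ⟨z, hz⟩ := exists_dense_range_algEquiv (Subfield.closure S)
  let g : ℂ → ι → Matrix (Fin n) (Fin n) ℂ := fun y i =>
    (1 - y) • (U i : Matrix _ _ ℂ) + y • (U' i : Matrix _ _ ℂ)
  have hg (i) : Continuous fun y => g y i := by fun_prop
  have hσ (σ : ℂ ≃ₐ[Subfield.closure S] ℂ) (i) : (g z i).map σ = g (σ z) i := by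
    have hfix {s : ℂ} (hs : s ∈ S) : σ s = s := σ.commutes ⟨s, Subfield.subset_closure hs⟩
    ext a b
    simp [g, hfix (.inl ⟨(i, a, b), rfl⟩), hfix (.inr ⟨(i, a, b), rfl⟩)]
  refine ⟨g z, fun i => ?_, fun c hc => Or.rec ?_ ?_⟩
  · refine isUnit_iff_ne_zero.2 fun hdet => (isUnit_det_unitary (U i)).ne_zero ?_
    have horbit : Set.range (fun σ : ℂ ≃ₐ[Subfield.closure S] ℂ => σ z) ⊆
        {y | (g y i).det = 0} := by
      rintro _ ⟨σ, rfl⟩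
      rw [Set.mem_ofPred_eq, ← hσ]
      exact ((σ : ℂ →+* ℂ).map_det (g z i)).symm.trans (by rw [hdet, map_zero])
    have hU : (g 0 i).det = 0 := (isClosed_eq (hg i).matrix_det continuous_const).closure_subset
      (hz.mono horbit 0)
    simpa [g] using hU
  · exact fun h => .of_specialization hz hg hσ hc (w := 0) (by simpa [g] using h)
  · exact fun h => .of_specialization hz hg hσ hc (w := 1) (by simpa [g] using h)

/-! ### Antitone sequences and sorted spectra -/

theorem exists_antitone_eq_sum_indicator {y : Fin n → ℝ} (hy : Antitone y) :
    ∃ (s : ℝ) (b : Fin n → ℝ), 0 ≤ b ∧ y = s • 1 + ∑ d, b d • (Set.Iic d).indicator 1 := by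
  rcases Nat.eq_zero_or_pos n with rfl | hn
  · exact ⟨0, 0, le_rfl, Subsingleton.elim _ _⟩
  let Y : ℕ → ℝ := fun i => y ⟨min i (n - 1), by omega⟩
  have hY : Antitone Y := fun i j hij => hy (Fin.mk_le_mk.2 (by omega))
  refine ⟨Y n, fun d => Y d - Y (d + 1), fun d => sub_nonneg.2 (hY (by omega)), funext fun j => ?_⟩
  have hj : Y j = y j := congrArg y (Fin.ext (by simp only; omega))
  have htelescope : ∑ d : Fin n, (if j ≤ d then Y d - Y (d + 1) else 0) = Y j - Y n :=
    calc ∑ d : Fin n, (if j ≤ d then Y d - Y (d + 1) else 0)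
        = ∑ d ∈ Finset.range n with (j : ℕ) ≤ d, (Y d - Y (d + 1)) := by
          rw [Finset.sum_filter]
          exact Fin.sum_univ_eq_sum_range (fun d => if (j : ℕ) ≤ d then Y d - Y (d + 1) else 0) n
      _ = ∑ d ∈ Finset.Ico (j : ℕ) n, (Y d - Y (d + 1)) :=
          Finset.sum_congr (by ext; simp [and_comm]) fun _ _ => rfl
      _ = Y j - Y n := by
          rw [← neg_sub (Y n), ← Finset.sum_Ico_sub Y j.2.le, ← Finset.sum_neg_distrib]
          simp only [neg_sub]
  simp [Set.indicator_apply, htelescope, hj]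

theorem map_nonneg_of_antitone (L : (Fin n → ℝ) →ₗ[ℝ] ℝ) (h1 : L 1 = 0)
    (hflag : ∀ d, 0 ≤ L ((Set.Iic d).indicator 1)) {y : Fin n → ℝ} (hy : Antitone y) :
    0 ≤ L y := by
  obtain ⟨s, b, hb, rfl⟩ := exists_antitone_eq_sum_indicator hy
  simp only [map_add, map_smul, map_sum, h1, smul_zero, zero_add]
  exact Finset.sum_nonneg fun d _ => smul_nonneg (hb d) (hflag d)

theorem exists_Ad_realDiag_comp (σ : Equiv.Perm (Fin n)) :
    ∃ P : unitaryGroup (Fin n) ℂ, ∀ y, Ad P (realDiag y) = realDiag (y ∘ σ) := by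
  have hstar : star (σ.permMatrix ℂ) = (σ⁻¹).permMatrix ℂ := conjTranspose_permMatrix σ
  have hmem : σ.permMatrix ℂ ∈ unitaryGroup (Fin n) ℂ := by
    rw [mem_unitaryGroup_iff, hstar, ← permMatrix_mul, inv_mul_cancel, permMatrix_one]
  refine ⟨⟨σ.permMatrix ℂ, hmem⟩, fun y => ?_⟩
  ext i j
  simp [hstar, PEquiv.toMatrix_toPEquiv_mul, PEquiv.mul_toMatrix_toPEquiv, realDiag_apply,
    diagonal_apply, Equiv.Perm.inv_def]

theorem exists_eq_Ad_realDiag_eigenvalues_comp {A : Matrix (Fin n) (Fin n) ℂ}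
    (hA : A.IsHermitian) (σ : Equiv.Perm (Fin n)) :
    ∃ U : unitaryGroup (Fin n) ℂ, A = Ad U (realDiag (hA.eigenvalues ∘ σ)) := by
  obtain ⟨P, hP⟩ := exists_Ad_realDiag_comp σ
  have hP' : Ad (star P) (realDiag (hA.eigenvalues ∘ σ)) = realDiag hA.eigenvalues := by
    rw [← hP, ← Unitary.conjStarAlgAut_mul_apply]
    simp
  refine ⟨hA.eigenvectorUnitary * star P, ?_⟩
  rw [Unitary.conjStarAlgAut_mul_apply, hP']
  exact hA.spectral_theorem

theorem exists_antitone_eq_Ad {A : Matrix (Fin n) (Fin n) ℂ} (hA : A.IsHermitian) :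
    ∃ (U : unitaryGroup (Fin n) ℂ) (y : Fin n → ℝ), Antitone y ∧ A = Ad U (realDiag y) := by
  let σ := Tuple.sort (OrderDual.toDual ∘ hA.eigenvalues)
  obtain ⟨U, hU⟩ := exists_eq_Ad_realDiag_eigenvalues_comp hA σ
  exact ⟨U, hA.eigenvalues ∘ σ, fun i j hij =>
    Tuple.monotone_sort (OrderDual.toDual ∘ hA.eigenvalues) hij, hU⟩

/-! ### The Kempf–Ness function -/

/-- The squared volume of the parallelepiped spanned by the first `k + 1` columns. -/
noncomputable def gramDet (k : Fin n) (M : Matrix (Fin n) (Fin n) ℂ) : ℝ :=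
  ‖((flagCols k M)ᴴ * flagCols k M).det‖

theorem posDef_flagCols_gram {M : Matrix (Fin n) (Fin n) ℂ} (hM : IsUnit M.det) (k : Fin n) :
    ((flagCols k M)ᴴ * flagCols k M).PosDef :=
  (PosDef.conjTranspose_mul_self M (mulVec_injective_iff_isUnit.2
    ((isUnit_iff_isUnit_det M).2 hM))).submatrix Subtype.val_injective

theorem gramDet_pos {M : Matrix (Fin n) (Fin n) ℂ} (hM : IsUnit M.det) (k : Fin n) :
    0 < gramDet k M :=
  norm_pos_iff.2 (posDef_flagCols_gram hM k).det_pos.ne'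

theorem gramDet_congr {M N : Matrix (Fin n) (Fin n) ℂ} (h : Mᴴ * M = Nᴴ * N) (k : Fin n) :
    gramDet k M = gramDet k N :=
  congrArg (fun A => ‖(corner k k A).det‖) h

theorem gramDet_coe_unitary (k : Fin n) (U : unitaryGroup (Fin n) ℂ) :
    gramDet k (U : Matrix (Fin n) (Fin n) ℂ) = 1 := by
  rw [gramDet, conjTranspose_flagCols_mul_self, det_one, norm_one]

theorem gramDet_mul_of_isUpperTriangular {T : Matrix (Fin n) (Fin n) ℂ}
    (hT : T.IsUpperTriangular) (k : Fin n) (M : Matrix (Fin n) (Fin n) ℂ) :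
    gramDet k (M * T) = gramDet k M * ‖(corner k k T).det‖ ^ 2 := by
  have h : (flagCols k (M * T))ᴴ * flagCols k (M * T) =
      (corner k k T)ᴴ * ((flagCols k M)ᴴ * flagCols k M) * corner k k T := by
    rw [flagCols_mul_of_isUpperTriangular hT]
    simp only [conjTranspose_mul, Matrix.mul_assoc]
  rw [gramDet, h, det_mul, det_mul, det_conjTranspose, norm_mul, norm_mul, norm_star, gramDet]
  ring

theorem continuous_gramDet (k : Fin n) : Continuous (gramDet k) := by
  unfold gramDet
  fun_prop

/-- The Kempf–Ness function of the tuple of flags spanned by the columns of the `g i`, polarized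
by `c`. -/
noncomputable def kempfNess (c : ι → Fin n → ℝ) (g : ι → Matrix (Fin n) (Fin n) ℂ)
    (h : Matrix (Fin n) (Fin n) ℂ) : ℝ :=
  ∑ i, ∑ k, c i k * Real.log (gramDet k (h * g i))

theorem kempfNess_congr (c : ι → Fin n → ℝ) (g : ι → Matrix (Fin n) (Fin n) ℂ)
    {h h' : Matrix (Fin n) (Fin n) ℂ} (hh : hᴴ * h = h'ᴴ * h') :
    kempfNess c g h = kempfNess c g h' := by
  have hgram (M : Matrix (Fin n) (Fin n) ℂ) : (h * M)ᴴ * (h * M) = (h' * M)ᴴ * (h' * M) := by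
    simp only [conjTranspose_mul, Matrix.mul_assoc]
    rw [← Matrix.mul_assoc hᴴ, hh, Matrix.mul_assoc]
  exact Finset.sum_congr rfl fun i _ => Finset.sum_congr rfl fun k _ => by
    rw [gramDet_congr (hgram (g i))]

theorem kempfNess_mul (c : ι → Fin n → ℝ) {g : ι → Matrix (Fin n) (Fin n) ℂ}
    {h X : Matrix (Fin n) (Fin n) ℂ} (hX : IsUnit X.det) (hg : ∀ i, IsUnit (h * g i).det)
    {U : ι → unitaryGroup (Fin n) ℂ} {T : ι → Matrix (Fin n) (Fin n) ℂ}
    (hT : ∀ i, (T i).IsUpperTriangular) (hUT : ∀ i, h * g i = U i * T i) :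
    kempfNess c g (X * h) = kempfNess c g h + kempfNess c (fun i => U i) X := by
  simp only [kempfNess, ← Finset.sum_add_distrib]
  refine Finset.sum_congr rfl fun i _ => Finset.sum_congr rfl fun k _ => ?_
  have hXU : IsUnit (X * U i).det := by
    rw [det_mul]
    exact hX.mul (isUnit_det_unitary (U i))
  have hmul : gramDet k (X * h * g i) = gramDet k (h * g i) * gramDet k (X * U i) := by
    rw [Matrix.mul_assoc, hUT, ← Matrix.mul_assoc, gramDet_mul_of_isUpperTriangular (hT i),
      gramDet_mul_of_isUpperTriangular (hT i), gramDet_coe_unitary, one_mul, mul_comm]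
  rw [hmul, Real.log_mul (gramDet_pos (hg i) k).ne' (gramDet_pos hXU k).ne', mul_add]

/-! ### Semistability bounds the Kempf–Ness function below -/

/-- The positive diagonal matrix whose square is `exp y`. -/
noncomputable def sqrtExp (y : Fin n → ℝ) : Matrix (Fin n) (Fin n) ℂ :=
  realDiag fun j => Real.exp (y j / 2)

theorem conjTranspose_realDiag (y : Fin n → ℝ) : (realDiag y)ᴴ = realDiag y := by
  rw [realDiag_apply, diagonal_conjTranspose]
  exact congrArg diagonal (funext fun j => Complex.conj_ofReal (y j))

theorem conjTranspose_sqrtExp_mul_self (y : Fin n → ℝ) :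
    (sqrtExp y)ᴴ * sqrtExp y = realDiag fun j => Real.exp (y j) := by
  rw [sqrtExp, conjTranspose_realDiag, ← map_mul]
  congr 1
  ext j
  simp [← Real.exp_add]

theorem det_realDiag (y : Fin n → ℝ) : (realDiag y).det = ∏ j, (y j : ℂ) := by
  rw [realDiag_apply, det_diagonal]

theorem exists_polar {h : Matrix (Fin n) (Fin n) ℂ} (hh : h.det = 1) :
    ∃ (V : unitaryGroup (Fin n) ℂ) (y : Fin n → ℝ), Antitone y ∧ ∑ j, y j = 0 ∧
      hᴴ * h = (sqrtExp y * (V : Matrix _ _ ℂ))ᴴ * (sqrtExp y * (V : Matrix _ _ ℂ)) := by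
  have hpos : (hᴴ * h).PosDef := .conjTranspose_mul_self h (mulVec_injective_iff_isUnit.2
    ((isUnit_iff_isUnit_det h).2 (by simp [hh])))
  obtain ⟨W, z, hz, hW⟩ := exists_antitone_eq_Ad hpos.1
  have hz0 (j) : 0 < z j := by
    rw [hW, Unitary.conjStarAlgAut_apply, Unitary.isUnit_coe.posDef_star_right_conjugate_iff,
      realDiag_apply, posDef_diagonal_iff] at hpos
    exact_mod_cast hpos j
  have hprod : ∏ j, z j = 1 := by
    have hdet : (hᴴ * h).det = (Ad W (realDiag z)).det := congrArg det hW
    rw [det_mul, det_conjTranspose, hh, star_one, one_mul, Unitary.conjStarAlgAut_apply,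
      det_mul_right_comm, mem_unitaryGroup_iff.1 W.2, one_mul, det_realDiag] at hdet
    exact_mod_cast hdet.symm
  refine ⟨star W, fun j => Real.log (z j), fun i j hij => Real.log_le_log (hz0 j) (hz hij), ?_, ?_⟩
  · rw [← Real.log_prod fun j _ => (hz0 j).ne', hprod, Real.log_one]
  · rw [conjTranspose_mul, Matrix.mul_assoc, ← Matrix.mul_assoc (sqrtExp _)ᴴ,
      conjTranspose_sqrtExp_mul_self, hW, Unitary.conjStarAlgAut_apply, ← Matrix.mul_assoc]
    simp [Real.exp_log (hz0 _), star_eq_conjTranspose]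

theorem sum_add_log_norm_det_le_log_gramDet {k : Fin n} (y : Fin n → ℝ)
    {M : Matrix (Fin n) (Fin n) ℂ} {e : Set.Iic k → Fin n} (he : e.Injective)
    (hdet : (M.submatrix e (↑)).det ≠ 0) :
    ∑ a, y (e a) + 2 * Real.log ‖(M.submatrix e (↑)).det‖ ≤
      Real.log (gramDet k (sqrtExp y * M)) := by
  set m := (M.submatrix e ((↑) : Set.Iic k → Fin n)).det
  have hminor : ((flagCols k (sqrtExp y * M)).submatrix e id).det =
      (∏ a, Real.exp (y (e a) / 2) : ℝ) * m := by
    have hrows : (flagCols k (sqrtExp y * M)).submatrix e id =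
        diagonal (fun a => (Real.exp (y (e a) / 2) : ℂ)) * M.submatrix e (↑) := by
      ext a b
      simp [sqrtExp, realDiag_apply, diagonal_mul]
    rw [hrows, det_mul, det_diagonal, Complex.ofReal_prod]
  have hsq : Real.exp (∑ a, y (e a) + 2 * Real.log ‖m‖) ≤ gramDet k (sqrtExp y * M) :=
    calc Real.exp (∑ a, y (e a) + 2 * Real.log ‖m‖)
        = ‖((flagCols k (sqrtExp y * M)).submatrix e id).det‖ ^ 2 := by
          rw [hminor, norm_mul, mul_pow, ← Real.exp_sum, Complex.norm_real, Real.norm_eq_abs,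
            Real.abs_exp, ← Finset.sum_div, ← Real.exp_nat_mul, Real.exp_add, two_mul (Real.log _),
            Real.exp_add, Real.exp_log (norm_pos_iff.2 hdet), sq ‖m‖]
          congr 2
          push_cast
          ring
      _ ≤ gramDet k (sqrtExp y * M) := norm_det_sq_le_norm_det_gram _ he
  exact (Real.le_log_iff_exp_le ((Real.exp_pos _).trans_le hsq)).2 hsq

theorem IsSemistable.sum_nonneg_of_antitone {c : ι → Fin n → ℝ}
    {g : ι → Matrix (Fin n) (Fin n) ℂ} (hg : IsSemistable c g) (hc : 0 ≤ c)
    (V : unitaryGroup (Fin n) ℂ) {e : ι → ∀ k : Fin n, Set.Iic k → Fin n}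
    (he : ∀ i k d, (corner d k ((V : Matrix (Fin n) (Fin n) ℂ) * g i)).rank ≤
      {a | e i k a ≤ d}.ncard)
    {y : Fin n → ℝ} (hy : Antitone y) (hy0 : ∑ j, y j = 0) :
    0 ≤ ∑ i, ∑ k, c i k * ∑ a, y (e i k a) := by
  rcases Nat.eq_zero_or_pos n with rfl | hn
  · simp
  let slope : ℝ := ∑ i, ∑ k, c i k * (k + 1)
  let L : (Fin n → ℝ) →ₗ[ℝ] ℝ := (n : ℝ) • ∑ i, ∑ k, c i k • ∑ a, LinearMap.proj (e i k a) -
    slope • ∑ j, LinearMap.proj j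
  have hL (x) : L x = n * (∑ i, ∑ k, c i k * ∑ a, x (e i k a)) - slope * ∑ j, x j := by
    simp [L]
  have h1 : L 1 = 0 := by
    simp [hL, slope, mul_comm]
  have hflag (d) : 0 ≤ L ((Set.Iic d).indicator 1) := by
    have hcount (i k) : ∑ a, (Set.Iic d).indicator (1 : Fin n → ℝ) (e i k a) =
        {a | e i k a ≤ d}.ncard := by
      simp [Set.indicator_apply, Set.ncard_eq_toFinset_card']
    have hsum : ∑ j, (Set.Iic d).indicator (1 : Fin n → ℝ) j = d + 1 := by
      simp [Set.indicator_apply, Finset.filter_ge_eq_Iic]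
    rw [hL, sub_nonneg, hsum]
    refine (hg V d).trans ?_
    gcongr with i _ k _
    · exact hc i k
    · rw [hcount]
      exact_mod_cast he i k d
  have hLy := map_nonneg_of_antitone L h1 hflag hy
  rw [hL, hy0, mul_zero, sub_zero] at hLy
  exact nonneg_of_mul_nonneg_right hLy (Nat.cast_pos.2 hn)

theorem IsSemistable.exists_eventually_le_kempfNess {c : ι → Fin n → ℝ}
    {g : ι → Matrix (Fin n) (Fin n) ℂ} (hc : 0 ≤ c) (hg : ∀ i, IsUnit (g i).det)
    (hss : IsSemistable c g) (V₀ : unitaryGroup (Fin n) ℂ) :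
    ∃ B : ℝ, ∀ᶠ V : unitaryGroup (Fin n) ℂ in nhds V₀, ∀ y : Fin n → ℝ, Antitone y → ∑ j, y j = 0 →
      -B ≤ kempfNess c g (sqrtExp y * (V : Matrix (Fin n) (Fin n) ℂ)) := by
  have hrank (i k) : (flagCols k ((V₀ : Matrix (Fin n) (Fin n) ℂ) * g i)).rank =
      Fintype.card (Set.Iic k) := by
    have hunit : IsUnit ((V₀ : Matrix (Fin n) (Fin n) ℂ) * g i).det := by
      rw [det_mul]
      exact (isUnit_det_unitary V₀).mul (hg i)
    rw [← rank_conjTranspose_mul_self, rank_of_isUnit _ (posDef_flagCols_gram hunit k).isUnit]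
  choose e he hdet hcount using fun i k => exists_submatrix_det_ne_zero _ (hrank i k)
  let minor (V : unitaryGroup (Fin n) ℂ) (i : ι) (k : Fin n) : ℂ :=
    (((V : Matrix (Fin n) (Fin n) ℂ) * g i).submatrix (e i k) (↑)).det
  let f (V : unitaryGroup (Fin n) ℂ) : ℝ := ∑ i, ∑ k, c i k * (2 * Real.log ‖minor V i k‖)
  have hminor (i k) : Continuous fun V => minor V i k := by fun_prop
  have hne : ∀ᶠ V in nhds V₀, ∀ i k, minor V i k ≠ 0 :=
    Filter.eventually_all.2 fun i => Filter.eventually_all.2 fun k =>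
      (hminor i k).continuousAt.eventually_ne (hdet i k)
  have hf : ContinuousAt f V₀ := tendsto_finsetSum _ fun i _ => tendsto_finsetSum _ fun k _ =>
    (((hminor i k).norm.continuousAt.log (norm_ne_zero_iff.2 (hdet i k))).const_mul _).const_mul _
  refine ⟨-(f V₀ - 1), ?_⟩
  filter_upwards [hne, hf.eventually (lt_mem_nhds (sub_one_lt (f V₀)))] with V hV hfV y hy hy0
  calc -(-(f V₀ - 1)) ≤ f V := by linarith
    _ ≤ (∑ i, ∑ k, c i k * ∑ a, y (e i k a)) + f V :=
      le_add_of_nonneg_left (hss.sum_nonneg_of_antitone hc V₀ hcount hy hy0)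
    _ ≤ kempfNess c g (sqrtExp y * (V : Matrix (Fin n) (Fin n) ℂ)) := by
      simp only [f, kempfNess, ← Finset.sum_add_distrib, ← mul_add]
      gcongr with i _ k _
      · exact hc i k
      · rw [Matrix.mul_assoc]
        exact sum_add_log_norm_det_le_log_gramDet y (he i k) (hV i k)

theorem IsSemistable.kempfNess_bddBelow {c : ι → Fin n → ℝ} {g : ι → Matrix (Fin n) (Fin n) ℂ}
    (hc : 0 ≤ c) (hg : ∀ i, IsUnit (g i).det) (hss : IsSemistable c g) :
    BddBelow (kempfNess c g '' {h | h.det = 1}) := by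
  obtain ⟨B, hB⟩ : ∃ B : ℝ, ∀ V : unitaryGroup (Fin n) ℂ, ∀ y : Fin n → ℝ, Antitone y →
      ∑ j, y j = 0 → -B ≤ kempfNess c g (sqrtExp y * (V : Matrix (Fin n) (Fin n) ℂ)) :=
    exists_forall_of_eventually (fun V B B' hB h y hy hy0 => (neg_le_neg hB).trans (h y hy hy0))
      (hss.exists_eventually_le_kempfNess hc hg)
  refine ⟨-B, ?_⟩
  rintro _ ⟨h, hh, rfl⟩
  obtain ⟨V, y, hy, hy0, hpolar⟩ := exists_polar hh
  exact (hB V y hy hy0).trans_eq (kempfNess_congr c g hpolar).symm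

/-! ### Descent of the Kempf–Ness function -/

theorem exists_sum_mul_exp_lt {m : Type*} [Fintype m] {q : m → ℝ} {a b : m} (hab : q b < q a) :
    ∃ s : m → ℝ, ∑ j, s j = 0 ∧ ∑ j, q j * Real.exp (s j) < ∑ j, q j := by
  classical
  have hcont : Continuous fun x : ℝ => q b * x := by fun_prop
  have hnear : ∀ᶠ x in nhdsWithin (1 : ℝ) (Set.Ioi 1), q b * x < q a :=
    (hcont.tendsto' 1 (q b) (mul_one _)).eventually (gt_mem_nhds hab) |>.filter_mono
      nhdsWithin_le_nhds
  obtain ⟨x, hx, hx1⟩ := (hnear.and self_mem_nhdsWithin).exists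
  replace hx1 : 1 < x := hx1
  have hx0 : 0 < x := one_pos.trans hx1
  have hne : a ≠ b := by rintro rfl; exact hab.false
  refine ⟨Pi.single b (Real.log x) - Pi.single a (Real.log x), by simp, ?_⟩
  rw [← sub_neg, ← Finset.sum_sub_distrib]
  calc ∑ j, (q j * Real.exp ((Pi.single b (Real.log x) - Pi.single a (Real.log x) : m → ℝ) j) -
        q j) = (q a * x⁻¹ - q a) + (q b * x - q b) := by
        rw [Fintype.sum_eq_add a b hne fun j hj => by simp [hj.1, hj.2]]
        simp [hne, hne.symm, Real.exp_neg, Real.exp_log hx0]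
    _ = (x - 1) * (q b * x - q a) / x := by field_simp; ring
    _ < 0 := div_neg_of_neg_of_pos
        (mul_neg_of_pos_of_neg (sub_pos.2 hx1) (sub_neg.2 hx)) hx0

theorem kempfNess_le {c : ι → Fin n → ℝ} (hc : 0 ≤ c) (U : ι → unitaryGroup (Fin n) ℂ)
    {X : Matrix (Fin n) (Fin n) ℂ} (hX : IsUnit X.det) :
    kempfNess c (fun i => U i) X ≤ (Xᴴ * X * moment c U).trace.re - (moment c U).trace.re := by
  have hone := trace_mul_moment_re c U 1
  rw [Matrix.one_mul] at hone
  rw [hone, trace_mul_moment_re]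
  simp only [kempfNess, ← Finset.sum_sub_distrib, ← mul_sub]
  gcongr with i _ k _
  · exact hc i k
  have hXU : IsUnit (X * U i).det := by
    rw [det_mul]
    exact hX.mul (isUnit_det_unitary (U i))
  have htrace : ((flagCols k (X * U i))ᴴ * flagCols k (X * U i)).trace =
      (Xᴴ * X * Ad (U i) (flagProj k)).trace := by
    rw [trace_mul_comm, flagCols_mul_conjTranspose, conjTranspose_mul,
      Unitary.conjStarAlgAut_apply, star_eq_conjTranspose, Matrix.mul_assoc Xᴴ, trace_mul_comm Xᴴ]
    simp only [Matrix.mul_assoc]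
  have hcard : (Fintype.card (Set.Iic k) : ℝ) = (1 * Ad (U i) (flagProj k)).trace.re := by
    rw [Matrix.one_mul, trace_Ad, trace_flagProj]
    simp
  rw [← htrace, ← hcard]
  exact log_norm_det_le (posDef_flagCols_gram hXU k)

theorem isHermitian_moment (c : ι → Fin n → ℝ) (U : ι → unitaryGroup (Fin n) ℂ) :
    (moment c U).IsHermitian := by
  have hflag (k : Fin n) : IsSelfAdjoint (flagProj k) := conjTranspose_realDiag _
  exact isSelfAdjoint_sum _ fun i _ => IsSelfAdjoint.map
    (isSelfAdjoint_sum _ fun k _ => (IsSelfAdjoint.all (c i k)).smul (hflag k)) (Ad (U i))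

theorem exists_kempfNess_neg {c : ι → Fin n → ℝ} (hc : 0 ≤ c) {U : ι → unitaryGroup (Fin n) ℂ}
    (hU : ∀ t : ℝ, moment c U ≠ t • 1) :
    ∃ X : Matrix (Fin n) (Fin n) ℂ, X.det = 1 ∧ kempfNess c (fun i => U i) X < 0 := by
  obtain ⟨W, q, -, hW⟩ := exists_antitone_eq_Ad (isHermitian_moment c U)
  obtain ⟨a, b, hab⟩ : ∃ a b, q b < q a := by
    by_contra! hconst
    rcases isEmpty_or_nonempty (Fin n) with _ | ⟨⟨a⟩⟩
    · exact hU 0 (Subsingleton.elim _ _)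
    · refine hU (q a) ?_
      have hqa : q = q a • 1 := funext fun b => by
        simpa using le_antisymm (hconst _ _) (hconst _ _)
      rw [hW, hqa, map_smul, map_smul, map_one, map_one]
      simp
  obtain ⟨s, hs0, hs⟩ := exists_sum_mul_exp_lt hab
  have hdet : (Ad W (sqrtExp s)).det = 1 := by
    rw [Unitary.conjStarAlgAut_apply, det_mul_right_comm, mem_unitaryGroup_iff.1 W.2, one_mul,
      sqrtExp, det_realDiag, ← Complex.ofReal_prod, ← Real.exp_sum, ← Finset.sum_div, hs0]
    simp
  refine ⟨Ad W (sqrtExp s), hdet, (kempfNess_le hc U (hdet ▸ isUnit_one)).trans_lt ?_⟩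
  have hprod : (Ad W (sqrtExp s))ᴴ * Ad W (sqrtExp s) * moment c U =
      Ad W (realDiag fun j => Real.exp (s j) * q j) := by
    rw [hW, ← star_eq_conjTranspose, ← map_star, ← map_mul, ← map_mul, star_eq_conjTranspose,
      conjTranspose_sqrtExp_mul_self, ← map_mul]
    rfl
  rw [hprod, hW, trace_Ad, trace_Ad, trace_realDiag_re, trace_realDiag_re, sub_neg]
  simpa only [mul_comm] using hs

theorem exists_uniform_descent {c : ι → Fin n → ℝ} (hc : 0 ≤ c)
    (hno : ∀ (U : ι → unitaryGroup (Fin n) ℂ) (t : ℝ), moment c U ≠ t • 1) :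
    ∃ N : ℕ, ∀ U : ι → unitaryGroup (Fin n) ℂ,
      ∃ X : Matrix (Fin n) (Fin n) ℂ, X.det = 1 ∧
        kempfNess c (fun i => U i) X < -(1 / ((N : ℝ) + 1)) := by
  refine exists_forall_of_eventually (fun U N N' hN ⟨X, hX, hlt⟩ => ⟨X, hX, hlt.trans_le
    (neg_le_neg (Nat.one_div_le_one_div hN))⟩) fun U => ?_
  obtain ⟨X, hX, hneg⟩ := exists_kempfNess_neg hc (hno U)
  obtain ⟨N, hN⟩ := exists_nat_one_div_lt (neg_pos.2 hneg)
  have hunit (i) : IsUnit (X * U i).det := by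
    rw [det_mul, hX, one_mul]
    exact isUnit_det_unitary (U i)
  have hgram (i k) : Continuous fun U : ι → unitaryGroup (Fin n) ℂ =>
      gramDet k (X * (U i : Matrix (Fin n) (Fin n) ℂ)) :=
    (continuous_gramDet k).comp (by fun_prop)
  have hcont : ContinuousAt
      (fun U : ι → unitaryGroup (Fin n) ℂ => kempfNess c (fun i => U i) X) U :=
    tendsto_finsetSum _ fun i _ => tendsto_finsetSum _ fun k _ =>
      ((hgram i k).continuousAt.log (gramDet_pos (hunit i) k).ne').const_mul _
  exact ⟨N, (hcont.eventually (gt_mem_nhds (lt_neg_of_lt_neg hN))).mono fun U' h => ⟨X, hX, h⟩⟩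

theorem exists_moment_eq_of_bddBelow {c : ι → Fin n → ℝ} (hc : 0 ≤ c)
    {g : ι → Matrix (Fin n) (Fin n) ℂ} (hg : ∀ i, IsUnit (g i).det)
    (hbdd : BddBelow (kempfNess c g '' {h | h.det = 1})) :
    ∃ (U : ι → unitaryGroup (Fin n) ℂ) (t : ℝ), moment c U = t • 1 := by
  -- A uniform descent step applied near the infimum would go below it.
  by_contra! hno
  obtain ⟨N, hN⟩ := exists_uniform_descent hc hno
  obtain ⟨_, ⟨h, hh, rfl⟩, hlt⟩ := exists_lt_of_csInf_lt
    (⟨_, 1, det_one, rfl⟩ : (kempfNess c g '' {h | h.det = 1}).Nonempty)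
    (lt_add_of_pos_right _ (Nat.one_div_pos_of_nat (n := N)))
  choose U T hT hUT using fun i => exists_unitary_mul_isUpperTriangular (h * g i)
  obtain ⟨X, hX, hdescent⟩ := hN U
  have hle : sInf (kempfNess c g '' {h | h.det = 1}) ≤ kempfNess c g (X * h) :=
    csInf_le hbdd ⟨X * h, by simp [hX, hh.out], rfl⟩
  rw [kempfNess_mul c (by simp [hX]) (fun i => by simpa [hh.out] using hg i) hT hUT] at hle
  linarith

/-! ### Spectra of sums of Hermitian matrices -/

/-- Some Hermitian matrices with spectra `α i` have a scalar sum. -/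
def SumsToScalar (α : ι → Fin n → ℝ) : Prop :=
  ∃ (U : ι → unitaryGroup (Fin n) ℂ) (t : ℝ), ∑ i, Ad (U i) (realDiag (α i)) = t • 1

theorem sum_Ad_realDiag_eq_add_moment (U : ι → unitaryGroup (Fin n) ℂ) (s : ι → ℝ)
    (c : ι → Fin n → ℝ) :
    ∑ i, Ad (U i) (realDiag (s i • 1 + ∑ d, c i d • (Set.Iic d).indicator 1)) =
      (∑ i, s i) • 1 + moment c U := by
  simp only [moment, flagProj, map_add, map_smul, map_sum, map_one, Finset.sum_add_distrib,
    Finset.sum_smul]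

theorem SumsToScalar.add {α β : ι → Fin n → ℝ} (hα : ∀ i, Antitone (α i))
    (hβ : ∀ i, Antitone (β i)) (hαt : SumsToScalar α) (hβt : SumsToScalar β) :
    SumsToScalar (α + β) := by
  choose s c hc hs using fun i => exists_antitone_eq_sum_indicator (hα i)
  choose s' c' hc' hs' using fun i => exists_antitone_eq_sum_indicator (hβ i)
  obtain ⟨U, t, hU⟩ := hαt
  obtain ⟨U', t', hU'⟩ := hβt
  have hmoment : moment c U = (t - ∑ i, s i) • 1 := by
    rw [sub_smul, ← hU, eq_sub_iff_add_eq', ← sum_Ad_realDiag_eq_add_moment]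
    simp only [← hs]
  have hmoment' : moment c' U' = (t' - ∑ i, s' i) • 1 := by
    rw [sub_smul, ← hU', eq_sub_iff_add_eq', ← sum_Ad_realDiag_eq_add_moment]
    simp only [← hs']
  obtain ⟨g, hg, hgeneric⟩ := exists_generic_flags U U'
  have hss : IsSemistable (c + c') g :=
    (hgeneric c hc (.inl (isSemistable_of_moment_eq hc hmoment))).add
      (hgeneric c' hc' (.inr (isSemistable_of_moment_eq hc' hmoment')))
  have hcc' : 0 ≤ c + c' := add_nonneg hc hc'
  obtain ⟨W, r, hW⟩ := exists_moment_eq_of_bddBelow hcc' hg (hss.kempfNess_bddBelow hcc' hg)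
  refine ⟨W, ∑ i, (s + s') i + r, ?_⟩
  rw [add_smul, ← hW, ← sum_Ad_realDiag_eq_add_moment]
  refine Finset.sum_congr rfl fun i _ => congrArg (fun y => Ad (W i) (realDiag y)) ?_
  simp only [Pi.add_apply, hs, hs', add_smul, Finset.sum_add_distrib]
  abel

/-- Some Hermitian matrices with spectra `lam i` have a sum with spectrum `a`. -/
def IsHornSum (lam : ι → Fin n → ℝ) (a : Fin n → ℝ) : Prop :=
  ∃ U : ι → unitaryGroup (Fin n) ℂ, ∑ i, Ad (U i) (realDiag (lam i)) = realDiag a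

theorem exists_Ad_realDiag_neg_rev :
    ∃ P : unitaryGroup (Fin n) ℂ, ∀ a, Ad P (realDiag (-a ∘ Fin.rev)) = -realDiag a := by
  obtain ⟨P, hP⟩ := exists_Ad_realDiag_comp (Fin.revPerm (n := n))
  refine ⟨P, fun a => ?_⟩
  rw [hP, ← map_neg]
  congr 1
  ext
  simp

theorem trace_sum_Ad_realDiag_re (U : ι → unitaryGroup (Fin n) ℂ) (lam : ι → Fin n → ℝ) :
    (∑ i, Ad (U i) (realDiag (lam i))).trace.re = ∑ i, ∑ j, lam i j := by
  simp only [trace_sum, Complex.re_sum, trace_Ad, trace_realDiag_re]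

theorem isHornSum_iff_sumsToScalar (lam : ι → Fin n → ℝ) (a : Fin n → ℝ) :
    IsHornSum lam a ↔ ∑ i, ∑ j, lam i j = ∑ j, a j ∧
      SumsToScalar fun o : Option ι => o.elim (-a ∘ Fin.rev) lam := by
  obtain ⟨P, hP⟩ := exists_Ad_realDiag_neg_rev (n := n)
  constructor
  · rintro ⟨U, hU⟩
    refine ⟨by rw [← trace_sum_Ad_realDiag_re U, hU, trace_realDiag_re], fun o => o.elim P U, 0, ?_⟩
    rw [Fintype.sum_option]
    simp only [Option.elim_none, Option.elim_some]
    rw [hP, hU, neg_add_cancel, zero_smul]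
  · rintro ⟨hsum, U, t, hU⟩
    rw [Fintype.sum_option] at hU
    simp only [Option.elim_none, Option.elim_some] at hU
    have ht : t • (1 : Matrix (Fin n) (Fin n) ℂ) = 0 := by
      rcases Nat.eq_zero_or_pos n with rfl | hn
      · exact Subsingleton.elim _ _
      have h := congrArg (fun A => A.trace.re) hU
      rw [trace_add, trace_Ad, Complex.add_re, trace_realDiag_re, trace_sum_Ad_realDiag_re,
        hsum] at h
      have hrevsum : ∑ j, a (Fin.rev j) = ∑ j, a j := Equiv.sum_comp Fin.revPerm a
      have htn : t * n = 0 := by simpa [hrevsum] using h.symm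
      rw [(mul_eq_zero.1 htn).resolve_right (by positivity), zero_smul]
    refine ⟨fun i => P * star (U none) * U (some i), ?_⟩
    rw [ht] at hU
    have h := congrArg (Ad (P * star (U none))) hU
    rw [map_add, map_zero, map_sum, ← Unitary.conjStarAlgAut_mul_apply] at h
    rw [mul_assoc, Unitary.star_mul_self, mul_one, hP] at h
    simp only [Unitary.conjStarAlgAut_mul_apply] at h ⊢
    exact (neg_add_eq_zero.1 h).symm

theorem IsHornSum.add {lam lam' : ι → Fin n → ℝ} {a a' : Fin n → ℝ}
    (hlam : ∀ i, Antitone (lam i)) (hlam' : ∀ i, Antitone (lam' i)) (ha : Antitone a)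
    (ha' : Antitone a') (h : IsHornSum lam a) (h' : IsHornSum lam' a') :
    IsHornSum (lam + lam') (a + a') := by
  have hanti {lam : ι → Fin n → ℝ} {a : Fin n → ℝ} (hlam : ∀ i, Antitone (lam i))
      (ha : Antitone a) (o : Option ι) : Antitone (o.elim (-a ∘ Fin.rev) lam) := by
    cases o with
    | none => exact fun i j hij => neg_le_neg (ha (Fin.rev_le_rev.2 hij))
    | some i => exact hlam i
  rw [isHornSum_iff_sumsToScalar] at h h' ⊢
  refine ⟨by simp [Finset.sum_add_distrib, h.1, h'.1], ?_⟩
  convert h.2.add (hanti hlam ha) (hanti hlam' ha') h'.2 using 1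
  ext (_ | i) j
  · simp [add_comm]
  · simp

theorem IsHornSum.sum {κ : Type*} (T : Finset κ) {lam : κ → ι → Fin n → ℝ}
    {a : κ → Fin n → ℝ} (hlam : ∀ p i, Antitone (lam p i)) (ha : ∀ p, Antitone (a p))
    (h : ∀ p, IsHornSum (lam p) (a p)) : IsHornSum (∑ p ∈ T, lam p) (∑ p ∈ T, a p) := by
  classical
  suffices h : (∀ i, Antitone ((∑ p ∈ T, lam p) i)) ∧ Antitone (∑ p ∈ T, a p) ∧
      IsHornSum (∑ p ∈ T, lam p) (∑ p ∈ T, a p) from h.2.2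
  induction T using Finset.induction_on with
  | empty =>
    exact ⟨fun _ => antitone_const, antitone_const, fun _ => 1, by simp⟩
  | insert p T hp ih =>
    obtain ⟨hl, ha', hT⟩ := ih
    rw [Finset.sum_insert hp, Finset.sum_insert hp]
    exact ⟨fun i => (hlam p i).add (hl i), (ha p).add ha', (h p).add (hlam p) hl (ha p) ha' hT⟩

/-! ### Majorization by order-preserving doubly stochastic matrices -/

section DoublyStochastic

variable {m : Type*} [Fintype m]

theorem isLinearMap_mulVec (x : m → ℝ) : IsLinearMap ℝ fun D : Matrix m m ℝ => D *ᵥ x :=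
  ⟨fun A B => add_mulVec A B x, fun c A => smul_mulVec c A x⟩

theorem exists_dotProduct_sub_nonneg_of_convex {K : Set (m → ℝ)} (hK : Convex ℝ K)
    (hKc : IsCompact K) (hne : K.Nonempty) (x : m → ℝ) :
    ∃ y ∈ K, ∀ z ∈ K, 0 ≤ (y - x) ⬝ᵥ (z - y) := by
  let e := (EuclideanSpace.equiv m ℝ).symm
  have hconv : Convex ℝ (e '' K) := hK.linear_image e.toLinearMap
  obtain ⟨-, ⟨y, hy, rfl⟩, hmin⟩ := exists_norm_eq_iInf_of_complete_convex (hne.image e)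
    (hKc.image e.continuous).isComplete hconv (e x)
  refine ⟨y, hy, fun z hz => ?_⟩
  have h := (norm_eq_iInf_iff_real_inner_le_zero hconv ⟨y, hy, rfl⟩).1 hmin (e z) ⟨z, hz, rfl⟩
  rw [← map_sub, ← map_sub, ← neg_sub y, map_neg, inner_neg_left, neg_nonpos] at h
  rwa [dotProduct_comm]

variable [DecidableEq m]

theorem isCompact_doublyStochastic :
    IsCompact (doublyStochastic ℝ m : Set (Matrix m m ℝ)) := by
  rw [doublyStochastic_eq_convexHull_permMatrix]
  exact (Set.finite_range fun σ : Equiv.Perm m => σ.permMatrix ℝ).isCompact_convexHull ℝ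

theorem dotProduct_mulVec_le_of_monovary {x y : m → ℝ} (hxy : Monovary x y) {D : Matrix m m ℝ}
    (hD : D ∈ doublyStochastic ℝ m) : x ⬝ᵥ D *ᵥ y ≤ x ⬝ᵥ y := by
  obtain ⟨w, hw0, hw1, rfl⟩ := exists_eq_sum_perm_of_mem_doublyStochastic hD
  calc x ⬝ᵥ (∑ σ, w σ • σ.permMatrix ℝ) *ᵥ y = ∑ σ, w σ * x ⬝ᵥ (y ∘ σ) := by
        simp only [sum_mulVec, smul_mulVec, permMatrix_mulVec, dotProduct_sum, dotProduct_smul,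
          smul_eq_mul]
    _ ≤ ∑ σ, w σ * x ⬝ᵥ y := Finset.sum_le_sum fun σ _ =>
        mul_le_mul_of_nonneg_left hxy.sum_mul_comp_perm_le_sum_mul (hw0 σ)
    _ = x ⬝ᵥ y := by rw [← Finset.sum_mul, hw1, one_mul]

end DoublyStochastic

/-- The doubly stochastic matrices whose action on vectors preserves antitone sequences. -/
def antitoneDoublyStochastic (n : ℕ) : Set (Matrix (Fin n) (Fin n) ℝ) :=
  {D | D ∈ doublyStochastic ℝ (Fin n) ∧ ∀ x, Antitone x → Antitone (D *ᵥ x)}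

theorem convex_antitoneDoublyStochastic : Convex ℝ (antitoneDoublyStochastic n) := by
  rintro A ⟨hA, hA'⟩ B ⟨hB, hB'⟩ s t hs ht hst
  refine ⟨convex_doublyStochastic hA hB hs ht hst, fun x hx => ?_⟩
  rw [add_mulVec, smul_mulVec, smul_mulVec]
  exact ((hA' x hx).const_smul hs).add ((hB' x hx).const_smul ht)

theorem isCompact_antitoneDoublyStochastic : IsCompact (antitoneDoublyStochastic n) := by
  refine isCompact_doublyStochastic.inter_right ?_
  have hcont (x : Fin n → ℝ) : Continuous fun D : Matrix (Fin n) (Fin n) ℝ => D *ᵥ x := by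
    fun_prop
  change IsClosed {D : Matrix (Fin n) (Fin n) ℝ | ∀ x, Antitone x → Antitone (D *ᵥ x)}
  simp only [Set.ofPred_forall]
  exact isClosed_iInter fun x => isClosed_iInter fun _ => isClosed_antitone.preimage (hcont x)

theorem one_mem_antitoneDoublyStochastic : 1 ∈ antitoneDoublyStochastic n :=
  ⟨one_mem _, fun x hx => by rwa [one_mulVec]⟩

theorem mul_mem_antitoneDoublyStochastic {A B : Matrix (Fin n) (Fin n) ℝ}
    (hA : A ∈ antitoneDoublyStochastic n) (hB : B ∈ antitoneDoublyStochastic n) :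
    A * B ∈ antitoneDoublyStochastic n :=
  ⟨mul_mem hA.1 hB.1, fun x hx => by rw [← mulVec_mulVec]; exact hA.2 _ (hB.2 x hx)⟩

/-- The T-transform replacing the entries at `i` and `j` of a vector by their average. -/
noncomputable def averaging (i j : Fin n) : Matrix (Fin n) (Fin n) ℝ :=
  (1 / 2 : ℝ) • 1 + (1 / 2 : ℝ) • (Equiv.swap i j).permMatrix ℝ

theorem averaging_mulVec (i j : Fin n) (x : Fin n → ℝ) :
    averaging i j *ᵥ x = (1 / 2 : ℝ) • (x + x ∘ Equiv.swap i j) := by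
  rw [averaging, add_mulVec, smul_mulVec, smul_mulVec, one_mulVec, permMatrix_mulVec, smul_add]

theorem averaging_mem_antitoneDoublyStochastic {i j : Fin n} (hij : (j : ℕ) = i + 1) :
    averaging i j ∈ antitoneDoublyStochastic n := by
  refine ⟨convex_doublyStochastic (one_mem _) permMatrix_mem_doublyStochastic
    (by norm_num) (by norm_num) (by norm_num), fun x hx a b hab => ?_⟩
  simp only [averaging_mulVec, Pi.smul_apply, Pi.add_apply, Function.comp_apply]
  refine smul_le_smul_of_nonneg_left ?_ (by norm_num)
  by_cases hswap : Equiv.swap i j a ≤ Equiv.swap i j b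
  · exact add_le_add (hx hab) (hx hswap)
  · obtain ⟨rfl, rfl⟩ : a = i ∧ b = j := by
      simp only [Equiv.swap_apply_def, Fin.ext_iff] at hswap ⊢
      split_ifs at hswap <;> omega
    rw [Equiv.swap_apply_left, Equiv.swap_apply_right, add_comm]

theorem dotProduct_averaging_mulVec_sub {i j : Fin n} (hij : i ≠ j) (x y : Fin n → ℝ) :
    x ⬝ᵥ (averaging i j *ᵥ y - y) = (1 / 2) * ((x j - x i) * (y i - y j)) := by
  have h : averaging i j *ᵥ y - y =
      ((1 / 2) * (y i - y j)) • (Pi.single j 1 - Pi.single i 1) := by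
    rw [averaging_mulVec]
    ext a
    simp only [Pi.sub_apply, Pi.smul_apply, Pi.add_apply, Function.comp_apply, smul_eq_mul]
    rcases eq_or_ne a i with rfl | hi
    · rw [Equiv.swap_apply_left, Pi.single_eq_same, Pi.single_eq_of_ne hij]
      ring
    rcases eq_or_ne a j with rfl | hj
    · rw [Equiv.swap_apply_right, Pi.single_eq_same, Pi.single_eq_of_ne hi]
      ring
    · rw [Equiv.swap_apply_of_ne_of_ne hi hj, Pi.single_eq_of_ne hi, Pi.single_eq_of_ne hj]
      ring
  rw [h, dotProduct_smul, dotProduct_sub, dotProduct_single_one, dotProduct_single_one, smul_eq_mul]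
  ring

theorem exists_antitoneDoublyStochastic_mulVec_eq {x : Fin n → ℝ} (hx : Antitone x)
    {E : Matrix (Fin n) (Fin n) ℝ} (hE : E ∈ doublyStochastic ℝ (Fin n))
    (hEx : Antitone (E *ᵥ x)) : ∃ D ∈ antitoneDoublyStochastic n, D *ᵥ x = E *ᵥ x := by
  -- `D *ᵥ x` is the point nearest to `E *ᵥ x`. Comparing it with its averages shows that the
  -- difference `δ` is monotone; comparing it with `x` then forces `δ = 0`.
  obtain ⟨-, ⟨D, hD, rfl⟩, hmin⟩ := exists_dotProduct_sub_nonneg_of_convex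
    (convex_antitoneDoublyStochastic.is_linear_image (isLinearMap_mulVec x))
    (isCompact_antitoneDoublyStochastic.image (by fun_prop))
    (Set.image_nonempty.2 ⟨1, one_mem_antitoneDoublyStochastic⟩) (E *ᵥ x)
  refine ⟨D, hD, ?_⟩
  simp only [Set.forall_mem_image] at hmin
  set δ := D *ᵥ x - E *ᵥ x with hδ
  have hmono : Monotone δ := by
    refine (monotone_iff_forall_covBy _).2 fun i j hij => ?_
    have hij' : (j : ℕ) = i + 1 := by simpa [Nat.covBy_iff_add_one_eq, eq_comm] using hij
    rcases (hD.2 x hx hij.le).eq_or_lt with heq | hlt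
    · simpa [hδ, heq, ← sub_nonneg] using hEx hij.le
    have h := hmin (mul_mem_antitoneDoublyStochastic
      (averaging_mem_antitoneDoublyStochastic hij') hD)
    rw [← mulVec_mulVec, dotProduct_averaging_mulVec_sub hij.ne] at h
    nlinarith
  have hxE : δ ⬝ᵥ x ≤ δ ⬝ᵥ E *ᵥ x := by
    have h := dotProduct_mulVec_le_of_monovary (hmono.neg.monovary hx) hE
    rwa [← Pi.neg_def, neg_dotProduct, neg_dotProduct, neg_le_neg_iff] at h
  have hxD : 0 ≤ δ ⬝ᵥ x - δ ⬝ᵥ D *ᵥ x := by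
    simpa only [one_mulVec, dotProduct_sub] using hmin one_mem_antitoneDoublyStochastic
  have hδ0 : δ ⬝ᵥ δ ≤ 0 := by
    rw [hδ, dotProduct_sub, ← hδ]
    linarith
  exact sub_eq_zero.1 (dotProduct_self_eq_zero.1 (hδ0.antisymm
    (Finset.sum_nonneg fun _ _ => mul_self_nonneg _)))

/-! ### Convex hulls of coadjoint orbits -/

open Polynomial in
theorem exists_perm_of_prod_X_sub_C_eq {R m : Type*} [CommRing R] [IsDomain R] [Fintype m]
    {f g : m → R} (h : ∏ i, (X - C (f i)) = ∏ i, (X - C (g i))) :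
    ∃ σ : Equiv.Perm m, f ∘ σ = g := by
  classical
  have hroots (f : m → R) : (∏ i, (X - C (f i))).roots = Finset.univ.val.map f := by
    rw [← roots_multiset_prod_X_sub_C (Finset.univ.val.map f), Multiset.map_map]
    rfl
  have hcard (c : R) : Nonempty ({a // g a = c} ≃ {a // f a = c}) := by
    refine ⟨Fintype.equivOfCardEq ?_⟩
    have hcount := congrArg (fun p => Multiset.count c p.roots) h
    simp only [hroots, Multiset.count_map, eq_comm (a := c)] at hcount
    rw [Fintype.card_subtype, Fintype.card_subtype]
    exact hcount.symm
  exact ⟨Equiv.ofFiberEquiv fun c => (hcard c).some, funext fun i => Equiv.ofFiberEquiv_map _ i⟩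

open Polynomial in
theorem charpoly_Ad_realDiag (U : unitaryGroup (Fin n) ℂ) (y : Fin n → ℝ) :
    (Ad U (realDiag y)).charpoly = ∏ i, (X - C (y i : ℂ)) := by
  rw [Unitary.conjStarAlgAut_apply, charpoly_mul_comm, ← mul_assoc, Unitary.coe_star_mul_self,
    one_mul, realDiag_apply, charpoly_diagonal]

theorem mem_coadjointOrbit_iff {lam : Fin n → ℝ} (h0 : ∑ i, lam i = 0)
    {A : Matrix (Fin n) (Fin n) ℂ} :
    A ∈ coadjointOrbit lam ↔ ∃ U : unitaryGroup (Fin n) ℂ, A = Ad U (realDiag lam) := by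
  constructor
  · rintro ⟨-, hA, σ, hσ⟩
    rw [← show hA.eigenvalues ∘ σ = lam from funext hσ]
    exact exists_eq_Ad_realDiag_eigenvalues_comp hA σ
  · rintro ⟨U, rfl⟩
    have hA : (Ad U (realDiag lam)).IsHermitian := by
      rw [IsHermitian, ← star_eq_conjTranspose, ← map_star, star_eq_conjTranspose,
        conjTranspose_realDiag]
    have htrace : (realDiag lam).trace = 0 := by
      rw [realDiag_apply, trace_diagonal, ← Complex.ofReal_sum, h0, Complex.ofReal_zero]
    obtain ⟨σ, hσ⟩ := exists_perm_of_prod_X_sub_C_eq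
      (hA.charpoly_eq.symm.trans (charpoly_Ad_realDiag U lam))
    exact ⟨by rw [trace_Ad, htrace], hA, σ, fun i => Complex.ofReal_injective (congrFun hσ i)⟩

theorem isHermitian_of_mem_convexHull_coadjointOrbit {lam : Fin n → ℝ}
    {A : Matrix (Fin n) (Fin n) ℂ} (hA : A ∈ convexHull ℝ (coadjointOrbit lam)) :
    A.IsHermitian :=
  convexHull_min (t := (selfAdjoint.submodule ℝ (Matrix (Fin n) (Fin n) ℂ) : Set _))
    (fun _ hB => hB.2.1) (Submodule.convex _) hA

theorem Ad_mem_convexHull_coadjointOrbit {lam : Fin n → ℝ} (h0 : ∑ i, lam i = 0)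
    (W : unitaryGroup (Fin n) ℂ) {A : Matrix (Fin n) (Fin n) ℂ}
    (hA : A ∈ convexHull ℝ (coadjointOrbit lam)) :
    Ad W A ∈ convexHull ℝ (coadjointOrbit lam) := by
  have hsub : convexHull ℝ (coadjointOrbit lam) ⊆ Ad W ⁻¹' convexHull ℝ (coadjointOrbit lam) := by
    refine convexHull_min (fun B hB => subset_convexHull ℝ _ ?_)
      ((convex_convexHull ℝ _).is_linear_preimage ⟨map_add (Ad W), map_smul (Ad W)⟩)
    obtain ⟨U, rfl⟩ := (mem_coadjointOrbit_iff h0).1 hB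
    exact (mem_coadjointOrbit_iff h0).2 ⟨W * U, (Unitary.conjStarAlgAut_mul_apply _ _ _).symm⟩
  exact hsub hA

/-- The matrix of squared moduli of the entries of a unitary matrix. -/
noncomputable def unistochastic (U : unitaryGroup (Fin n) ℂ) : Matrix (Fin n) (Fin n) ℝ :=
  of fun i j => Complex.normSq (U i j)

theorem diag_Ad_realDiag_re (U : unitaryGroup (Fin n) ℂ) (y : Fin n → ℝ) (i : Fin n) :
    (Ad U (realDiag y) i i).re = (unistochastic U *ᵥ y) i := by
  rw [Unitary.conjStarAlgAut_apply, realDiag_apply, mul_apply, Complex.re_sum]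
  refine Finset.sum_congr rfl fun j _ => ?_
  rw [mul_diagonal, star_apply, mul_right_comm, Complex.star_def, Complex.mul_conj,
    ← Complex.ofReal_mul, Complex.ofReal_re]
  rfl

theorem unistochastic_mem_doublyStochastic (U : unitaryGroup (Fin n) ℂ) :
    unistochastic U ∈ doublyStochastic ℝ (Fin n) := by
  have hrow (U : unitaryGroup (Fin n) ℂ) : unistochastic U *ᵥ 1 = 1 := by
    ext i
    rw [← diag_Ad_realDiag_re, map_one, map_one, one_apply_eq, Complex.one_re, Pi.one_apply]
  have htranspose : unistochastic (star U) = (unistochastic U)ᵀ := by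
    ext i j
    simp [unistochastic, star_apply]
  exact mem_doublyStochastic.2 ⟨fun i j => Complex.normSq_nonneg _, hrow U, by
    rw [← mulVec_transpose, ← htranspose, hrow]⟩

/-- The Schur–Horn theorem, up to convex hulls. -/
theorem realDiag_mem_convexHull_coadjointOrbit_iff {lam : Fin n → ℝ} (h0 : ∑ i, lam i = 0)
    {a : Fin n → ℝ} :
    realDiag a ∈ convexHull ℝ (coadjointOrbit lam) ↔
      ∃ D ∈ doublyStochastic ℝ (Fin n), D *ᵥ lam = a := by
  constructor
  · intro ha
    let re_diag : Matrix (Fin n) (Fin n) ℂ →ₗ[ℝ] Fin n → ℝ :=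
      LinearMap.pi fun i => Complex.reLm ∘ₗ entryLinearMap ℝ ℂ i i
    have hconv := convex_doublyStochastic.is_linear_image (isLinearMap_mulVec lam)
    have h := convexHull_min (fun A hA => ?_) (hconv.linear_preimage re_diag) ha
    · have hdiag : re_diag (realDiag a) = a := by
        rw [realDiag_apply]
        exact funext fun i => congrArg Complex.re (diagonal_apply_eq _ i)
      rwa [Set.mem_preimage, hdiag] at h
    obtain ⟨U, rfl⟩ := (mem_coadjointOrbit_iff h0).1 hA
    exact ⟨_, unistochastic_mem_doublyStochastic U,
      (funext fun i => diag_Ad_realDiag_re U lam i).symm⟩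
  · rintro ⟨D, hD, rfl⟩
    rw [← SetLike.mem_coe, doublyStochastic_eq_convexHull_permMatrix] at hD
    refine convexHull_min ?_ (((convex_convexHull ℝ _).linear_preimage
      realDiag.toLinearMap).is_linear_preimage (isLinearMap_mulVec lam)) hD
    rintro - ⟨σ, rfl⟩
    obtain ⟨P, hP⟩ := exists_Ad_realDiag_comp σ
    refine subset_convexHull ℝ _ ((mem_coadjointOrbit_iff h0).2 ⟨P, ?_⟩)
    rw [hP, ← permMatrix_mulVec]
    rfl

/-! ### Partial convex hulls of coadjoint orbits -/

theorem partialConvexHull_subset_convexHull {E : Type*} [AddCommGroup E] [Module ℝ E] (r : ℕ)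
    (X : Set E) : partialConvexHull r X ⊆ convexHull ℝ X := by
  rintro y ⟨f, hf, hy⟩
  exact convexHull_mono (Set.range_subset_iff.2 hf) hy

theorem convex_partialConvexHull_iff {E : Type*} [AddCommGroup E] [Module ℝ E] {r : ℕ}
    (hr : 1 ≤ r) (X : Set E) :
    Convex ℝ (partialConvexHull r X) ↔ convexHull ℝ X ⊆ partialConvexHull r X := by
  constructor
  · exact convexHull_min fun x hx => ⟨fun _ => x, fun _ => hx, subset_convexHull ℝ _ ⟨⟨0, hr⟩, rfl⟩⟩
  · intro h
    rw [(partialConvexHull_subset_convexHull r X).antisymm h]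
    exact convex_convexHull ℝ X

theorem convexHull_range_eq_image_stdSimplex {E : Type*} [AddCommGroup E] [Module ℝ E]
    (f : ι → E) : convexHull ℝ (Set.range f) = Fintype.linearCombination ℝ f '' stdSimplex ℝ ι := by
  classical
  rw [← convexHull_rangle_single_eq_stdSimplex, LinearMap.image_convexHull, ← Set.range_comp]
  congr
  ext i
  simp [Fintype.linearCombination_apply_single]

theorem IsHornSum.smul {lam : ι → Fin n → ℝ} {a : Fin n → ℝ} (c : ℝ) (h : IsHornSum lam a) :
    IsHornSum (c • lam) (c • a) := by
  obtain ⟨U, hU⟩ := h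
  refine ⟨U, ?_⟩
  simp only [Pi.smul_apply, map_smul, ← Finset.smul_sum, hU]

theorem isHornSum_of_realDiag_mem_partialConvexHull {r : ℕ} {lam a : Fin n → ℝ}
    (hlam : Antitone lam) (h0 : ∑ i, lam i = 0) (ha : Antitone a)
    (h : realDiag a ∈ partialConvexHull r (coadjointOrbit lam)) :
    IsHornSum (fun _ : Fin r => lam) (r • a) := by
  obtain ⟨f, hf, hfa⟩ := h
  rw [convexHull_range_eq_image_stdSimplex] at hfa
  obtain ⟨t, ⟨ht0, ht1⟩, hta⟩ := hfa
  rw [Fintype.linearCombination_apply] at hta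
  choose U hU using fun i => (mem_coadjointOrbit_iff h0).1 (hf i)
  have : NeZero r := ⟨by rintro rfl; simp at ht1⟩
  -- Summing the cyclic shifts of a convex combination makes all weights equal.
  have hshift (p : Fin r) : IsHornSum (fun i => t (i + p) • lam) a := by
    refine ⟨fun i => U (i + p), ?_⟩
    simp only [map_smul, ← hU]
    rw [← hta]
    exact Equiv.sum_comp (Equiv.addRight p) fun i => t i • f i
  have hsum := IsHornSum.sum Finset.univ (fun p i => hlam.const_smul (ht0 (i + p)))
    (fun _ => ha) hshift
  convert hsum using 1
  · ext i j
    have hti : ∑ p, t (i + p) = 1 := (Equiv.sum_comp (Equiv.addLeft i) t).trans ht1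
    simp [Finset.sum_apply, ← Finset.sum_mul, hti]
  · simp

theorem IsHornSum.Ad_mem_partialConvexHull {r : ℕ} (hr : 1 ≤ r) {lam a : Fin n → ℝ}
    (h0 : ∑ i, lam i = 0) (h : IsHornSum (fun _ : Fin r => lam) (r • a))
    (W : unitaryGroup (Fin n) ℂ) :
    Ad W (realDiag a) ∈ partialConvexHull r (coadjointOrbit lam) := by
  obtain ⟨U, hU⟩ := h
  have hr0 : (r : ℝ) ≠ 0 := by positivity
  refine ⟨fun i => Ad (W * U i) (realDiag lam),
    fun i => (mem_coadjointOrbit_iff h0).2 ⟨W * U i, rfl⟩, ?_⟩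
  rw [convexHull_range_eq_image_stdSimplex]
  refine ⟨fun _ => (r : ℝ)⁻¹, ⟨fun _ => by positivity, by simp [hr0]⟩, ?_⟩
  simp only [Fintype.linearCombination_apply, Unitary.conjStarAlgAut_mul_apply]
  rw [← Finset.smul_sum, ← map_sum, hU, ← Nat.cast_smul_eq_nsmul ℝ, map_smul, map_smul,
    inv_smul_smul₀ hr0]

theorem convex_partialConvexHull_coadjointOrbit_iff {r : ℕ} (hr : 1 ≤ r) {lam : Fin n → ℝ}
    (hlam : Antitone lam) (h0 : ∑ i, lam i = 0) :
    Convex ℝ (partialConvexHull r (coadjointOrbit lam)) ↔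
      ∀ D ∈ antitoneDoublyStochastic n, IsHornSum (fun _ : Fin r => lam) (r • D *ᵥ lam) := by
  rw [convex_partialConvexHull_iff hr]
  constructor
  · intro h D hD
    exact isHornSum_of_realDiag_mem_partialConvexHull hlam h0 (hD.2 lam hlam)
      (h ((realDiag_mem_convexHull_coadjointOrbit_iff h0).2 ⟨D, hD.1, rfl⟩))
  · intro h A hA
    obtain ⟨W, a, ha, rfl⟩ :=
      exists_antitone_eq_Ad (isHermitian_of_mem_convexHull_coadjointOrbit hA)
    have ha' := Ad_mem_convexHull_coadjointOrbit h0 (star W) hA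
    rw [← Unitary.conjStarAlgAut_mul_apply, Unitary.star_mul_self, map_one] at ha'
    obtain ⟨E, hE, rfl⟩ := (realDiag_mem_convexHull_coadjointOrbit_iff h0).1 ha'
    obtain ⟨D, hD, hDE⟩ := exists_antitoneDoublyStochastic_mulVec_eq hlam hE ha
    rw [← hDE]
    exact (h D hD).Ad_mem_partialConvexHull hr h0 W

end HornProblem

/-- The set `𝔠_r` of decreasing trace-free `λ ∈ ℝ^n` for which `C_r(O_λ)` is convex
is a convex cone: it contains `0`, is closed under addition, and under multiplication
by nonnegative scalars. -/
theorem Cr_isConvexCone (n : ℕ) (hn : 2 ≤ n) (r : ℕ) (hr : 1 ≤ r) :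
    (0 : Fin n → ℝ) ∈ {lam : Fin n → ℝ | Antitone lam ∧ ∑ i, lam i = 0 ∧
        Convex ℝ (partialConvexHull r (coadjointOrbit lam))} ∧
    (∀ lam mu : Fin n → ℝ,
      lam ∈ {lam : Fin n → ℝ | Antitone lam ∧ ∑ i, lam i = 0 ∧
        Convex ℝ (partialConvexHull r (coadjointOrbit lam))} →
      mu ∈ {lam : Fin n → ℝ | Antitone lam ∧ ∑ i, lam i = 0 ∧
        Convex ℝ (partialConvexHull r (coadjointOrbit lam))} →
      lam + mu ∈ {lam : Fin n → ℝ | Antitone lam ∧ ∑ i, lam i = 0 ∧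
        Convex ℝ (partialConvexHull r (coadjointOrbit lam))}) ∧
    (∀ (c : ℝ), 0 ≤ c → ∀ lam : Fin n → ℝ,
      lam ∈ {lam : Fin n → ℝ | Antitone lam ∧ ∑ i, lam i = 0 ∧
        Convex ℝ (partialConvexHull r (coadjointOrbit lam))} →
      c • lam ∈ {lam : Fin n → ℝ | Antitone lam ∧ ∑ i, lam i = 0 ∧
        Convex ℝ (partialConvexHull r (coadjointOrbit lam))}) := by
  have convex_iff := @HornProblem.convex_partialConvexHull_coadjointOrbit_iff n r hr
  refine ⟨⟨antitone_const, Finset.sum_const_zero, ?_⟩, ?_, ?_⟩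
  · refine (convex_iff (lam := 0) antitone_const Finset.sum_const_zero).2 fun D _ => ⟨1, ?_⟩
    simp only [map_zero, Finset.sum_const_zero, Matrix.mulVec_zero, smul_zero]
  · rintro lam mu ⟨hlam, hlam0, hlamC⟩ ⟨hmu, hmu0, hmuC⟩
    rw [convex_iff hlam hlam0] at hlamC
    rw [convex_iff hmu hmu0] at hmuC
    have hsum : ∑ i, (lam + mu) i = 0 := by
      simp only [Pi.add_apply, Finset.sum_add_distrib, hlam0, hmu0, add_zero]
    refine ⟨hlam.add hmu, hsum, (convex_iff (lam := lam + mu) (hlam.add hmu) hsum).2 fun D hD => ?_⟩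
    rw [Matrix.mulVec_add, smul_add]
    exact (hlamC D hD).add (fun _ => hlam) (fun _ => hmu) ((hD.2 lam hlam).const_smul r.zero_le)
      ((hD.2 mu hmu).const_smul r.zero_le) (hmuC D hD)
  · rintro c hc lam ⟨hlam, hlam0, hlamC⟩
    rw [convex_iff hlam hlam0] at hlamC
    have hsum : ∑ i, (c • lam) i = 0 := by
      simp only [Pi.smul_apply, ← Finset.smul_sum, hlam0, smul_zero]
    have hanti : Antitone (c • lam) := hlam.const_smul hc
    refine ⟨hanti, hsum, (convex_iff hanti hsum).2 fun D hD => ?_⟩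
    rw [Matrix.mulVec_smul, smul_comm r c]
    exact (hlamC D hD).smul c
end

section
/- Let n ≥ 2 and let λ ∈ ℝ^n satisfy λ_1 ≥ … ≥ λ_n and λ_1+…+λ_n = 0. Then the n-th partial convex hull of O_λ equals the convex hull of O_λ: C_n(O_λ) = Conv(O_λ). (Here n = ℓ+1 where ℓ = n−1 is the rank of SU(n).) -/
/-!
Every point of `Conv(O_λ)` is Hermitian and `Conv(O_λ)` is stable under unitary conjugation, so it
suffices to treat a diagonal matrix `diag(μ) ∈ Conv(O_λ)`. The diagonal of `U diag(λ) U*` is `D λ`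
with `D i j = |U i j|²` doubly stochastic, so by Birkhoff's theorem `μ` lies in the convex hull of
the rearrangements of `λ` (Schur). These rearrangements span an affine space of dimension at most
`n - 1`, since all have the same coordinate sum, so by Carathéodory's theorem `n` of them suffice
for `μ`; and `diag(λ ∘ σ) ∈ O_λ` for every permutation `σ`.
-/

open Matrix Unitary

section PartialConvexHull

variable {E F : Type*} [AddCommGroup E] [Module ℝ E] [AddCommGroup F] [Module ℝ F]
  {X : Set E} {Y : Set F} {r : ℕ} {x : E}

lemma partialConvexHull_subset_convexHull : partialConvexHull r X ⊆ convexHull ℝ X := by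
  rintro y ⟨f, hf, hy⟩
  exact convexHull_mono (Set.range_subset_iff.mpr hf) hy

lemma map_mem_partialConvexHull (f : E →ₗ[ℝ] F) (hf : Set.MapsTo f X Y)
    (hx : x ∈ partialConvexHull r X) : f x ∈ partialConvexHull r Y := by
  obtain ⟨p, hp, hx⟩ := hx
  refine ⟨f ∘ p, fun i => hf (hp i), ?_⟩
  rw [Set.range_comp, ← f.image_convexHull]
  exact Set.mem_image_of_mem f hx

lemma mem_partialConvexHull_of_finset {t : Finset E} (htX : ↑t ⊆ X) (ht : t.card ≤ r)
    (hx : x ∈ convexHull ℝ (t : Set E)) : x ∈ partialConvexHull r X := by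
  have : Nonempty t := (convexHull_nonempty_iff.mp ⟨x, hx⟩).to_subtype
  obtain ⟨e⟩ : Nonempty (t ↪ Fin r) := Function.Embedding.nonempty_of_card_le (by simpa using ht)
  refine ⟨fun i => (Function.invFun e i : t), fun i => htX (Function.invFun e i).2, ?_⟩
  have hrange : Set.range (fun i => ((Function.invFun e i : t) : E)) = t :=
    ((Function.invFun_surjective e.injective).range_comp _).trans Subtype.range_coe
  rwa [hrange]

theorem partialConvexHull_eq_convexHull_of_finrank_vectorSpan_lt
    [FiniteDimensional ℝ (vectorSpan ℝ X)] (h : Module.finrank ℝ (vectorSpan ℝ X) < r) :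
    partialConvexHull r X = convexHull ℝ X := by
  refine partialConvexHull_subset_convexHull.antisymm fun x hx => ?_
  rw [convexHull_eq_union] at hx
  simp only [Set.mem_iUnion] at hx
  obtain ⟨t, htX, htind, hxt⟩ := hx
  refine mem_partialConvexHull_of_finset htX ?_ hxt
  calc t.card ≤ Module.finrank ℝ (vectorSpan ℝ (Set.range ((↑) : t → E))) + 1 := by
        simpa using htind.card_le_finrank_succ
    _ ≤ Module.finrank ℝ (vectorSpan ℝ X) + 1 := by
        gcongr
        exact Submodule.finrank_mono (vectorSpan_mono ℝ (by simpa using htX))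
    _ ≤ r := h

end PartialConvexHull

lemma finrank_vectorSpan_lt_of_forall_eq {K V W : Type*} [DivisionRing K] [AddCommGroup V]
    [Module K V] [FiniteDimensional K V] [AddCommGroup W] [Module K W] {φ : V →ₗ[K] W}
    (hφ : φ ≠ 0) {X : Set V} {c : W} (hX : ∀ x ∈ X, φ x = c) :
    Module.finrank K (vectorSpan K X) < Module.finrank K V := by
  have hle : vectorSpan K X ≤ LinearMap.ker φ := by
    rw [vectorSpan_def, Submodule.span_le]
    rintro _ ⟨a, ha, b, hb, rfl⟩
    simp [hX a ha, hX b hb]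
  exact Submodule.finrank_lt fun h => hφ (LinearMap.ker_eq_top.mp (top_le_iff.mp (h ▸ hle)))

lemma exists_equiv_comp_eq_of_map_univ_val_eq {ι κ α : Type*} [Fintype ι] [Fintype κ]
    {f : ι → α} {g : κ → α} (h : Finset.univ.val.map f = Finset.univ.val.map g) :
    ∃ e : ι ≃ κ, g ∘ e = f := by
  classical
  have hfiber (c : α) : Nonempty ({i // f i = c} ≃ {k // g k = c}) := by
    have hcount := congrArg (Multiset.count c) h
    rw [Multiset.count_map, Multiset.count_map] at hcount
    rw [← Fintype.card_eq, Fintype.card_subtype, Fintype.card_subtype]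
    simpa only [Finset.card_def, Finset.filter_val, eq_comm] using hcount
  exact ⟨Equiv.ofFiberEquiv fun c => (hfiber c).some, funext (Equiv.ofFiberEquiv_map _)⟩

/-- The vectors obtained from `v` by permuting its coordinates: the vertices of the permutohedron
of `v`. -/
def rearrangements {ι : Type*} (v : ι → ℝ) : Set (ι → ℝ) :=
  Set.range fun σ : Equiv.Perm ι => v ∘ σ

variable {ι : Type*} [Fintype ι]

theorem partialConvexHull_rearrangements [Nonempty ι] (v : ι → ℝ) :
    partialConvexHull (Fintype.card ι) (rearrangements v) = convexHull ℝ (rearrangements v) := by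
  apply partialConvexHull_eq_convexHull_of_finrank_vectorSpan_lt
  rw [← Module.finrank_fintype_fun_eq_card ℝ]
  let coordSum : (ι → ℝ) →ₗ[ℝ] ℝ := ∑ i, LinearMap.proj i
  have hcoordSum : coordSum ≠ 0 := fun h => by simpa [coordSum] using LinearMap.congr_fun h 1
  refine finrank_vectorSpan_lt_of_forall_eq hcoordSum (c := ∑ i, v i) ?_
  rintro _ ⟨σ, rfl⟩
  simpa [coordSum] using Equiv.sum_comp σ v

variable [DecidableEq ι]

theorem mulVec_mem_convexHull_rearrangements {D : Matrix ι ι ℝ} (hD : D ∈ doublyStochastic ℝ ι)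
    (v : ι → ℝ) : D *ᵥ v ∈ convexHull ℝ (rearrangements v) := by
  obtain ⟨w, hw0, hw1, rfl⟩ := exists_eq_sum_perm_of_mem_doublyStochastic hD
  simp only [sum_mulVec, smul_mulVec, permMatrix_mulVec]
  exact (convex_convexHull ℝ _).sum_mem (fun σ _ => hw0 σ) hw1
    fun σ _ => subset_convexHull ℝ _ (Set.mem_range_self σ)

variable {𝕜 : Type*} [RCLike 𝕜]

section UnitaryConjugation

lemma map_norm_sq_mem_doublyStochastic (U : unitaryGroup ι 𝕜) :
    U.1.map (fun z => ‖z‖ ^ 2) ∈ doublyStochastic ℝ ι := by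
  rw [mem_doublyStochastic_iff_sum]
  refine ⟨fun i j => sq_nonneg _, fun i => ?_, fun j => ?_⟩
  · have h : (U.1 * star U.1) i i = 1 := by rw [Unitary.mul_star_self_of_mem U.2, one_apply_eq]
    simp only [mul_apply, star_apply, RCLike.star_def, RCLike.mul_conj] at h
    exact_mod_cast h
  · have h : (star U.1 * U.1) j j = 1 := by rw [Unitary.star_mul_self_of_mem U.2, one_apply_eq]
    simp only [mul_apply, star_apply, RCLike.star_def, RCLike.conj_mul] at h
    exact_mod_cast h

lemma mul_diagonal_mul_star_apply_self (A : Matrix ι ι 𝕜) (v : ι → ℝ) (i : ι) :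
    (A * diagonal (RCLike.ofReal ∘ v : ι → 𝕜) * star A) i i =
      ((A.map (fun z => ‖z‖ ^ 2) *ᵥ v) i : ℝ) := by
  rw [mul_apply, mulVec, dotProduct, RCLike.ofReal_sum]
  refine Finset.sum_congr rfl fun j _ => ?_
  simp [mul_diagonal, mul_right_comm, RCLike.mul_conj]

lemma permMatrix_mem_unitaryGroup {R : Type*} [CommRing R] [StarRing R] (σ : Equiv.Perm ι) :
    σ.permMatrix R ∈ unitaryGroup ι R := by
  rw [mem_unitaryGroup_iff, star_eq_conjTranspose, conjTranspose_permMatrix, ← permMatrix_mul,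
    inv_mul_cancel, permMatrix_one]

lemma conjStarAlgAut_eigenvectorUnitary_diagonal_eigenvalues {A : Matrix ι ι 𝕜}
    (hA : A.IsHermitian) :
    conjStarAlgAut ℝ (Matrix ι ι 𝕜) hA.eigenvectorUnitary
      (diagonal (RCLike.ofReal ∘ hA.eigenvalues)) = A :=
  hA.spectral_theorem.symm

end UnitaryConjugation

/-- The orbit of the real diagonal matrix `diag(lam)` under conjugation by the unitary group over
`𝕜`; for `𝕜 = ℝ` these are the real symmetric, and for `𝕜 = ℂ` the Hermitian, matrices whose
eigenvalues with multiplicity are `lam`. It extends `coadjointOrbit` to arbitrary trace, index type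
and base field. -/
def unitaryOrbit (𝕜 : Type*) [RCLike 𝕜] (lam : ι → ℝ) : Set (Matrix ι ι 𝕜) :=
  Set.range fun U : unitaryGroup ι 𝕜 =>
    conjStarAlgAut ℝ (Matrix ι ι 𝕜) U (diagonal (RCLike.ofReal ∘ lam))

namespace unitaryOrbit

variable {lam mu : ι → ℝ} {A : Matrix ι ι 𝕜}

lemma mapsTo_conjStarAlgAut (U : unitaryGroup ι 𝕜) :
    Set.MapsTo (conjStarAlgAut ℝ (Matrix ι ι 𝕜) U) (unitaryOrbit 𝕜 lam) (unitaryOrbit 𝕜 lam) := by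
  rintro _ ⟨V, rfl⟩
  exact ⟨U * V, conjStarAlgAut_mul_apply U V _⟩

lemma mapsTo_conjStarAlgAut_convexHull (U : unitaryGroup ι 𝕜) :
    Set.MapsTo (conjStarAlgAut ℝ (Matrix ι ι 𝕜) U) (convexHull ℝ (unitaryOrbit 𝕜 lam))
      (convexHull ℝ (unitaryOrbit 𝕜 lam)) :=
  convexHull_min ((mapsTo_conjStarAlgAut U).mono_right (subset_convexHull ℝ _))
    ((convex_convexHull ℝ _).linear_preimage
      (conjStarAlgAut ℝ (Matrix ι ι 𝕜) U).toAlgEquiv.toLinearMap)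

lemma diagonal_comp_perm_mem (lam : ι → ℝ) (σ : Equiv.Perm ι) :
    diagonal (RCLike.ofReal ∘ lam ∘ σ) ∈ unitaryOrbit 𝕜 lam := by
  refine ⟨⟨σ.permMatrix 𝕜, permMatrix_mem_unitaryGroup σ⟩, ?_⟩
  simp only [conjStarAlgAut_apply, star_eq_conjTranspose, conjTranspose_permMatrix,
    PEquiv.toMatrix_toPEquiv_mul, PEquiv.mul_toMatrix_toPEquiv]
  ext i j
  simp [diagonal_apply, Equiv.eq_symm_apply]

lemma isHermitian (hA : A ∈ unitaryOrbit 𝕜 lam) : A.IsHermitian := by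
  obtain ⟨U, rfl⟩ := hA
  have hdiag : IsSelfAdjoint (diagonal (RCLike.ofReal ∘ lam : ι → 𝕜)) :=
    isHermitian_diagonal_iff.mpr fun i => RCLike.conj_ofReal (lam i)
  exact hdiag.map (conjStarAlgAut ℝ (Matrix ι ι 𝕜) U)

lemma isHermitian_of_mem_convexHull (hA : A ∈ convexHull ℝ (unitaryOrbit 𝕜 lam)) :
    A.IsHermitian :=
  convexHull_min (fun _ => isHermitian)
    (selfAdjoint.submodule ℝ (Matrix ι ι 𝕜)).convex hA

lemma charpoly_eq (hA : A ∈ unitaryOrbit 𝕜 lam) :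
    A.charpoly = (diagonal (RCLike.ofReal ∘ lam : ι → 𝕜)).charpoly := by
  obtain ⟨U, rfl⟩ := hA
  simp only [conjStarAlgAut_apply]
  rw [charpoly_mul_comm, ← mul_assoc, Unitary.coe_star_mul_self, one_mul]

theorem mem_iff_exists_eigenvalues_comp_perm_eq :
    A ∈ unitaryOrbit 𝕜 lam ↔
      ∃ hA : A.IsHermitian, ∃ σ : Equiv.Perm ι, hA.eigenvalues ∘ σ = lam := by
  constructor
  · intro hA
    have hroots : Finset.univ.val.map (RCLike.ofReal ∘ (isHermitian hA).eigenvalues : ι → 𝕜) =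
        Finset.univ.val.map (RCLike.ofReal ∘ lam) := by
      rw [← (isHermitian hA).roots_charpoly_eq_eigenvalues, charpoly_eq hA, charpoly_diagonal,
        Polynomial.roots_prod _ _ (Finset.prod_ne_zero_iff.mpr fun i _ =>
          Polynomial.X_sub_C_ne_zero _)]
      simp
    rw [← Multiset.map_map, ← Multiset.map_map] at hroots
    exact ⟨isHermitian hA, exists_equiv_comp_eq_of_map_univ_val_eq
      (Multiset.map_injective RCLike.ofReal_injective hroots).symm⟩
  · rintro ⟨hA, σ, rfl⟩
    have hdiag : diagonal (RCLike.ofReal ∘ hA.eigenvalues) ∈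
        unitaryOrbit 𝕜 (hA.eigenvalues ∘ σ) := by
      simpa [Function.comp_assoc] using diagonal_comp_perm_mem (hA.eigenvalues ∘ σ) σ⁻¹
    have hconj := mapsTo_conjStarAlgAut hA.eigenvectorUnitary hdiag
    rwa [conjStarAlgAut_eigenvectorUnitary_diagonal_eigenvalues] at hconj

theorem re_diag_mem_convexHull_rearrangements (hA : A ∈ convexHull ℝ (unitaryOrbit 𝕜 lam)) :
    (fun i => RCLike.re (A i i)) ∈ convexHull ℝ (rearrangements lam) := by
  let reDiag : Matrix ι ι 𝕜 →ₗ[ℝ] ι → ℝ := RCLike.reLm.compLeft ι ∘ₗ diagLinearMap ι ℝ 𝕜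
  refine convexHull_min ?_ ((convex_convexHull ℝ _).linear_preimage reDiag) hA
  rintro _ ⟨U, rfl⟩
  have hdiag : reDiag (conjStarAlgAut ℝ (Matrix ι ι 𝕜) U (diagonal (RCLike.ofReal ∘ lam))) =
      U.1.map (fun z => ‖z‖ ^ 2) *ᵥ lam := funext fun i =>
    (congrArg RCLike.re (mul_diagonal_mul_star_apply_self U.1 lam i)).trans (RCLike.ofReal_re _)
  rw [Set.mem_preimage, hdiag]
  exact mulVec_mem_convexHull_rearrangements (map_norm_sq_mem_doublyStochastic U) lam

theorem eigenvalues_mem_convexHull_rearrangements (hH : A.IsHermitian)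
    (hA : A ∈ convexHull ℝ (unitaryOrbit 𝕜 lam)) :
    hH.eigenvalues ∈ convexHull ℝ (rearrangements lam) := by
  have hdiag : diagonal (RCLike.ofReal ∘ hH.eigenvalues) ∈ convexHull ℝ (unitaryOrbit 𝕜 lam) := by
    rw [← hH.conjStarAlgAut_star_eigenvectorUnitary]
    exact mapsTo_conjStarAlgAut_convexHull (star hH.eigenvectorUnitary) hA
  simpa using re_diag_mem_convexHull_rearrangements hdiag

lemma diagonal_mem_partialConvexHull {r : ℕ}
    (hmu : mu ∈ partialConvexHull r (rearrangements lam)) :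
    diagonal (RCLike.ofReal ∘ mu) ∈ partialConvexHull r (unitaryOrbit 𝕜 lam) := by
  let realDiagonal : (ι → ℝ) →ₗ[ℝ] Matrix ι ι 𝕜 :=
    diagonalLinearMap ι ℝ 𝕜 ∘ₗ RCLike.ofRealAm.toLinearMap.compLeft ι
  refine map_mem_partialConvexHull realDiagonal ?_ hmu
  rintro _ ⟨σ, rfl⟩
  exact diagonal_comp_perm_mem lam σ

end unitaryOrbit

theorem coadjointOrbit_eq_unitaryOrbit {n : ℕ} {lam : Fin n → ℝ} (hsum : ∑ i, lam i = 0) :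
    coadjointOrbit lam = unitaryOrbit ℂ lam := by
  ext A
  rw [unitaryOrbit.mem_iff_exists_eigenvalues_comp_perm_eq]
  refine ⟨fun ⟨_, hA, σ, hσ⟩ => ⟨hA, σ, funext hσ⟩, fun ⟨hA, σ, hσ⟩ => ⟨?_, hA, σ, congrFun hσ⟩⟩
  rw [hA.trace_eq_sum_eigenvalues, ← RCLike.ofReal_sum, ← Equiv.sum_comp σ hA.eigenvalues]
  simp only [← Function.comp_apply (f := hA.eigenvalues), hσ, hsum, RCLike.ofReal_zero]

theorem partialConvexHull_n_eq_convexHull_general [Nonempty ι] (lam : ι → ℝ) :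
    partialConvexHull (Fintype.card ι) (unitaryOrbit 𝕜 lam) =
      convexHull ℝ (unitaryOrbit 𝕜 lam) := by
  refine partialConvexHull_subset_convexHull.antisymm fun A hA => ?_
  have hH : A.IsHermitian := unitaryOrbit.isHermitian_of_mem_convexHull hA
  have heig : hH.eigenvalues ∈ partialConvexHull (Fintype.card ι) (rearrangements lam) := by
    rw [partialConvexHull_rearrangements]
    exact unitaryOrbit.eigenvalues_mem_convexHull_rearrangements hH hA
  rw [← conjStarAlgAut_eigenvectorUnitary_diagonal_eigenvalues hH]
  exact map_mem_partialConvexHull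
    (conjStarAlgAut ℝ (Matrix ι ι 𝕜) hH.eigenvectorUnitary).toAlgEquiv.toLinearMap
    (unitaryOrbit.mapsTo_conjStarAlgAut hH.eigenvectorUnitary)
    (unitaryOrbit.diagonal_mem_partialConvexHull heig)

/-- For decreasing trace-free `λ ∈ ℝ^n`, the `n`-th partial convex hull of `O_λ`
equals the convex hull of `O_λ`. -/
theorem partialConvexHull_n_eq_convexHull (n : ℕ) (hn : 2 ≤ n)
    (lam : Fin n → ℝ) (hmono : Antitone lam) (hsum : ∑ i, lam i = 0) :
    partialConvexHull n (coadjointOrbit lam) = convexHull ℝ (coadjointOrbit lam) := by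
  have : NeZero n := ⟨by omega⟩
  simpa [coadjointOrbit_eq_unitaryOrbit hsum] using
    partialConvexHull_n_eq_convexHull_general (𝕜 := ℂ) lam
end
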